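/- arXiv:0812.1219 — 3 statements merged into one kernel-verified Lean document; each statement's English description precedes it below -/
import Mathlib

section
/- Let n and n^l both lie in ℤ₊^{m₁+1}(•) × ℤ₊^{m₂+1}(•) with n_{1,m₁} ≥ 2. Then for every j ∈ {−m₂,…,m₁}, the zeros of A_{n,j} and A_{n^l,j} interlace: all these zeros are real and simple, and strictly between any two consecutive zeros of A_{n,j} there is a zero of A_{n^l,j}, and strictly between any two consecutive zeros of A_{n^l,j} there is a zero of A_{n,j}. (For 0 ≤ j ≤ m₁ the zeros in question are those in ℂ∖Δ¹_{j+1}, which lie in the interior of Δ¹_j; for −m₂ ≤ j ≤ −1 they are the zeros of A_{n,j} in ℂ∖Δ²_{−j−1}, which lie in the interior of Δ²_{−j}.) -/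
open MeasureTheory Polynomial Set Filter

noncomputable section

/-- The support of a Borel measure on `ℝ`: points all of whose open neighborhoods
have positive measure. -/
def msupport (μ : Measure ℝ) : Set ℝ :=
  {x : ℝ | ∀ U : Set ℝ, IsOpen U → x ∈ U → μ U ≠ 0}

/-- The copy of a real set inside `ℂ`. -/
def cpx (s : Set ℝ) : Set ℂ := (fun x : ℝ => (x : ℂ)) '' s

/-- `nikhat μ e j g` is the Cauchy transform of the measure `⟨σ_j, …, σ_{j+g}⟩`,
where `σ_i = (e i) • (μ i)` is a measure of constant sign. -/
def nikhat (μ : ℕ → Measure ℝ) (e : ℕ → ℝ) : ℕ → ℕ → ℂ → ℂ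
  | j, 0, z => (e j : ℂ) * ∫ t, 1 / (z - (t : ℂ)) ∂(μ j)
  | j, g + 1, z => (e j : ℂ) * ∫ t, nikhat μ e (j + 1) g (t : ℂ) / (z - (t : ℂ)) ∂(μ j)

/-- The Cauchy transform `ŝ_{j+1,k}` of `s_{j+1,k} = ⟨σ_{j+1},…,σ_k⟩`, with the
convention that it is `≡ 1` when `k ≤ j`. -/
def wt (μ : ℕ → Measure ℝ) (e : ℕ → ℝ) (j k : ℕ) (z : ℂ) : ℂ :=
  if j < k then nikhat μ e (j + 1) (k - (j + 1)) z else 1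

/-- Integral of `f` against the measure `s_{j,k} = ⟨σ_j, …, σ_k⟩`
(whose density with respect to `σ_j` is `ŝ_{j+1,k}`). -/
def sInt (μ : ℕ → Measure ℝ) (e : ℕ → ℝ) (j k : ℕ) (f : ℝ → ℂ) : ℂ :=
  (e j : ℂ) * ∫ x, f x * wt μ e j k (x : ℂ) ∂(μ j)

/-- The linear form `𝒜_{n,j}(z) = ∑_{k=j}^{m₁} a_k(z) ŝ¹_{j+1,k}(z)`. -/
def linForm (μ : ℕ → Measure ℝ) (e : ℕ → ℝ) (m₁ j : ℕ) (A : ℕ → Polynomial ℝ)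
    (z : ℂ) : ℂ :=
  ∑ k ∈ Finset.Icc j m₁, Polynomial.aeval z (A k) * wt μ e j k z

/-- The linear forms with negative index:
`𝒜_{n,-j-1}(z) = ∫ 𝒜_{n,-j}(x) dσ²_j(x) / (z - x)`. -/
def linFormNeg (μ : ℕ → Measure ℝ) (e : ℕ → ℝ) (F : ℂ → ℂ) : ℕ → ℂ → ℂ
  | 0 => F
  | j + 1 => fun z => (e j : ℂ) * ∫ x, linFormNeg μ e F j (x : ℂ) / (z - (x : ℂ)) ∂(μ j)

/-- A Nikishin system `N(σ_0,…,σ_m)` of measures of constant sign `σ_j = (e j) • (μ j)`,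
with `Co(supp σ_j) = Δ_j = [a j, b j]` and `Δ_j ∩ Δ_{j+1} = ∅`. -/
structure NikSys (m : ℕ) where
  μ : ℕ → Measure ℝ
  e : ℕ → ℝ
  a : ℕ → ℝ
  b : ℕ → ℝ
  fin : ∀ j, IsFiniteMeasure (μ j)
  sgn : ∀ j, e j = 1 ∨ e j = -1
  hull : ∀ j ≤ m, convexHull ℝ (msupport (μ j)) = Set.Icc (a j) (b j)
  inf : ∀ j ≤ m, (msupport (μ j)).Infinite
  disj : ∀ j < m, Set.Icc (a j) (b j) ∩ Set.Icc (a (j + 1)) (b (j + 1)) = ∅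

/-- Decreasing multi-index (the class `ℤ₊^{m+1}(•)`). -/
def Decr (m : ℕ) (n : ℕ → ℕ) : Prop := ∀ j < m, n (j + 1) ≤ n j

/-- `|n| = n_0 + ⋯ + n_m`. -/
def msum (m : ℕ) (n : ℕ → ℕ) : ℕ := ∑ j ∈ Finset.range (m + 1), n j

/-- `N_{1,j} = n_j + ⋯ + n_m` (partial tail sums). -/
def tailSum (m : ℕ) (n : ℕ → ℕ) (j : ℕ) : ℕ := ∑ k ∈ Finset.Icc j m, n k

/-- Mixed type multiple orthogonal polynomials relative to `(n1;n2)` and `(S1,S2)`. -/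
def IsMOP (m₁ m₂ : ℕ) (S1 : NikSys m₁) (S2 : NikSys m₂)
    (n1 n2 : ℕ → ℕ) (A : ℕ → Polynomial ℝ) : Prop :=
  (∀ j ≤ m₁, (A j).degree < (n1 j : WithBot ℕ)) ∧
  (∃ j ≤ m₁, A j ≠ 0) ∧
  ∀ k ≤ m₂, ∀ ν < n2 k,
    sInt S2.μ S2.e 0 k (fun x => (x : ℂ) ^ ν * linForm S1.μ S1.e m₁ 0 A (x : ℂ)) = 0

/-- The "monic" normalization: the last entry different from zero has leading
coefficient `1`. -/
def MonicLast (m₁ : ℕ) (A : ℕ → Polynomial ℝ) : Prop :=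
  ∃ j ≤ m₁, (A j).Monic ∧ ∀ k, j < k → k ≤ m₁ → A k = 0

/-- `n^l`: increase the `l`-th component by one. -/
def bump (l : ℕ) (n : ℕ → ℕ) : ℕ → ℕ := fun j => if j = l then n j + 1 else n j


/-- Between any two consecutive real zeros of `f` in the region `D` there is a real
zero of `g`. -/
def InterlaceOn (f g : ℂ → ℂ) (D : Set ℂ) : Prop :=
  ∀ x₁ x₂ : ℝ, x₁ < x₂ → (x₁ : ℂ) ∈ D → (x₂ : ℂ) ∈ D →
    f x₁ = 0 → f x₂ = 0 →
    (∀ y : ℝ, x₁ < y → y < x₂ → (y : ℂ) ∈ D → f y ≠ 0) →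
    ∃ y : ℝ, x₁ < y ∧ y < x₂ ∧ g y = 0

/-! ### Generic facts about Cauchy transforms -/

structure Good (μ : Measure ℝ) (a b : ℝ) : Prop where
  fin : IsFiniteMeasure μ
  ae : ∀ᵐ x ∂μ, x ∈ Set.Icc a b
  lt : a < b
  inf : ∀ s : Set ℝ, s.Finite → μ sᶜ ≠ 0

def HasFac (F : ℂ → ℂ) (D : Set ℂ) (W : Polynomial ℝ) : Prop :=
  ∃ H : ℂ → ℂ, DifferentiableOn ℂ H D ∧ ∀ z ∈ D, F z = Polynomial.aeval z W * H z

theorem mem_cpx {s : Set ℝ} {x : ℝ} : (x : ℂ) ∈ cpx s ↔ x ∈ s := by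
  unfold cpx
  constructor
  · rintro ⟨y, hy, h⟩
    have : y = x := Complex.ofReal_injective h
    exact this ▸ hy
  · intro h; exact ⟨x, h, rfl⟩

theorem isCompact_cpx (a b : ℝ) : IsCompact (cpx (Set.Icc a b)) :=
  isCompact_Icc.image Complex.continuous_ofReal

theorem isOpen_cpx (a b : ℝ) : IsOpen (cpx (Set.Icc a b))ᶜ :=
  (isCompact_cpx a b).isClosed.isOpen_compl

theorem ne_of_cpx {a b : ℝ} {z : ℂ} (hz : z ∈ (cpx (Set.Icc a b))ᶜ) {x : ℝ}
    (hx : x ∈ Set.Icc a b) : z - (x : ℂ) ≠ 0 := by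
  intro h
  apply hz
  have : z = x := sub_eq_zero.mp h
  rw [this]; exact mem_cpx.mpr hx

theorem Good.int {μ : Measure ℝ} {a b : ℝ} (h : Good μ a b) {f : ℝ → ℂ}
    (hf : ContinuousOn f (Set.Icc a b)) : Integrable f μ := by
  have := h.fin
  have h1 : μ.restrict (Set.Icc a b) = μ := Measure.restrict_eq_self_of_ae_mem h.ae
  rw [← h1]
  exact hf.integrableOn_compact isCompact_Icc

theorem Good.intR {μ : Measure ℝ} {a b : ℝ} (h : Good μ a b) {f : ℝ → ℝ}
    (hf : ContinuousOn f (Set.Icc a b)) : Integrable f μ := by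
  have := h.fin
  have h1 : μ.restrict (Set.Icc a b) = μ := Measure.restrict_eq_self_of_ae_mem h.ae
  rw [← h1]
  exact hf.integrableOn_compact isCompact_Icc

theorem contOn_div {a b : ℝ} {f : ℝ → ℂ} (hf : ContinuousOn f (Set.Icc a b)) {z : ℂ}
    (hz : z ∈ (cpx (Set.Icc a b))ᶜ) :
    ContinuousOn (fun x : ℝ => f x / (z - (x : ℂ))) (Set.Icc a b) := by
  apply hf.div
  · fun_prop
  · intro x hx; exact ne_of_cpx hz hx

theorem Good.integral_congr {μ : Measure ℝ} {a b : ℝ} (h : Good μ a b) {f g : ℝ → ℂ}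
    (hfg : ∀ x ∈ Set.Icc a b, f x = g x) : ∫ x, f x ∂μ = ∫ x, g x ∂μ := by
  apply integral_congr_ae
  filter_upwards [h.ae] with x hx using hfg x hx

theorem cau_diff {μ : Measure ℝ} {a b : ℝ} (h : Good μ a b) {f : ℝ → ℂ}
    (hf : ContinuousOn f (Set.Icc a b)) :
    DifferentiableOn ℂ (fun z : ℂ => ∫ x, f x / (z - (x : ℂ)) ∂μ) (cpx (Set.Icc a b))ᶜ := by
  intro z0 hz0
  apply DifferentiableAt.differentiableWithinAt
  obtain ⟨ε, hε, hball⟩ := Metric.isOpen_iff.mp (isOpen_cpx a b) z0 hz0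
  have hlow : ∀ z ∈ Metric.ball z0 (ε / 2), ∀ x ∈ Set.Icc a b, ε / 2 ≤ ‖z - (x : ℂ)‖ := by
    intro z hz x hx
    by_contra hlt
    push Not at hlt
    have : (x : ℂ) ∈ Metric.ball z0 ε := by
      rw [Metric.mem_ball] at hz ⊢
      have h1 : dist (x : ℂ) z < ε / 2 := by rw [dist_comm, dist_eq_norm]; exact hlt
      linarith [dist_triangle (x : ℂ) z z0]
    exact hball this (mem_cpx.mpr hx)
  have hsub : ∀ z ∈ Metric.ball z0 (ε / 2), z ∈ (cpx (Set.Icc a b))ᶜ := fun z hz =>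
    hball (Metric.ball_subset_ball (by linarith) hz)
  have hz0' : z0 ∈ Metric.ball z0 (ε / 2) := Metric.mem_ball_self (by linarith)
  have key := hasDerivAt_integral_of_dominated_loc_of_deriv_le (μ := μ) (𝕜 := ℂ)
    (F := fun z x => f x / (z - (x : ℂ))) (F' := fun z x => - f x / (z - (x : ℂ)) ^ 2)
    (x₀ := z0) (s := Metric.ball z0 (ε / 2)) (bound := fun x => ‖f x‖ / (ε / 2) ^ 2)
    (Metric.ball_mem_nhds z0 (by linarith)) ?_ ?_ ?_ ?_ ?_ ?_
  · exact key.2.differentiableAt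
  · filter_upwards [Metric.ball_mem_nhds z0 (show 0 < ε / 2 by linarith)] with z hz
    exact (h.int (contOn_div hf (hsub z hz))).aestronglyMeasurable
  · exact h.int (contOn_div hf hz0)
  · refine (h.int (ContinuousOn.div hf.neg ?_ ?_)).aestronglyMeasurable
    · fun_prop
    · intro x hx; exact pow_ne_zero _ (ne_of_cpx hz0 hx)
  · filter_upwards [h.ae] with x hx z hz
    rw [norm_div, norm_neg, norm_pow]
    gcongr
    exact hlow z hz x hx
  · exact (h.int hf).norm.div_const _
  · filter_upwards [h.ae] with x hx z hz
    have h1 := (hasDerivAt_id z).sub_const (x : ℂ)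
    have h2 := (hasDerivAt_const z (f x)).fun_div h1 (ne_of_cpx (hsub z hz) hx)
    have e : - f x / (z - (x : ℂ)) ^ 2 = (0 * (id z - (x : ℂ)) - f x * 1) / (id z - (x : ℂ)) ^ 2 := by
      simp only [id]
      ring
    exact e ▸ h2

theorem eq_of_punctured {f g : ℂ → ℂ} {z : ℂ} {D : Set ℂ} (hD : IsOpen D) (hz : z ∈ D)
    (hf : ContinuousOn f D) (hg : ContinuousOn g D) (h : ∀ w ∈ D, w ≠ z → f w = g w) :
    f z = g z := by
  have h1 : Tendsto f (nhdsWithin z {z}ᶜ) (nhds (f z)) :=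
    (hf.continuousAt (hD.mem_nhds hz)).tendsto.mono_left nhdsWithin_le_nhds
  have h2 : Tendsto g (nhdsWithin z {z}ᶜ) (nhds (g z)) :=
    (hg.continuousAt (hD.mem_nhds hz)).tendsto.mono_left nhdsWithin_le_nhds
  refine tendsto_nhds_unique_of_eventuallyEq h1 h2 ?_
  filter_upwards [self_mem_nhdsWithin, mem_nhdsWithin_of_mem_nhds (hD.mem_nhds hz)] with w hw hwD
  exact h w hwD hw

theorem root_split (W : ℂ[X]) (M : ℕ) (hM : W.natDegree = M + 1) :
    ∃ (z1 : ℂ) (W1 : ℂ[X]), W = (X - C z1) * W1 ∧ W1.natDegree = M := by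
  have hdeg : W.degree ≠ 0 := by
    intro h0
    have := natDegree_eq_zero_iff_degree_le_zero.mpr h0.le
    omega
  obtain ⟨z1, hz1⟩ := IsAlgClosed.exists_root W hdeg
  obtain ⟨W1, hW1⟩ := dvd_iff_isRoot.mpr hz1
  refine ⟨z1, W1, hW1, ?_⟩
  have hne : W1 ≠ 0 := by
    rintro rfl
    simp at hW1; simp [hW1] at hM
  rw [hW1, natDegree_mul (X_sub_C_ne_zero z1) hne, natDegree_X_sub_C] at hM
  omega

theorem cauchy_step {μ : Measure ℝ} {a b : ℝ} (h : Good μ a b) (M : ℕ) :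
    ∀ (W P : ℂ[X]) (f : ℝ → ℂ) (H : ℂ → ℂ) (d k : ℕ), W.natDegree = M →
    (∀ x ∈ Set.Icc a b, W.eval (x : ℂ) ≠ 0) → ContinuousOn f (Set.Icc a b) →
    P.degree < (d : WithBot ℕ) → (d = 0 ∨ k = 0) →
    (∀ ν < k, ∫ x, (x : ℂ) ^ ν * f x ∂μ = 0) →
    ContinuousOn H (cpx (Set.Icc a b))ᶜ →
    (∀ z ∈ (cpx (Set.Icc a b))ᶜ, P.eval z + ∫ x, f x / (z - (x : ℂ)) ∂μ = W.eval z * H z) →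
    ∀ ν, ν + d < M + k → ∫ x, (x : ℂ) ^ ν * (f x / W.eval (x : ℂ)) ∂μ = 0 := by
  induction M with
  | zero =>
    intro W P f H d k hM hW hf hP hdk hmom hH heq ν hν
    obtain ⟨c, rfl⟩ := natDegree_eq_zero.mp hM
    have hd : d = 0 := by omega
    have := hmom ν (by omega)
    simp only [eval_C]
    have h2 : ∀ x : ℝ, (x : ℂ) ^ ν * (f x / c) = ((x : ℂ) ^ ν * f x) / c := fun x => by ring
    rw [integral_congr_ae (Filter.Eventually.of_forall fun x => h2 x), integral_div, this, zero_div]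
  | succ M ih =>
    intro W P f H d k hM hW hf hP hdk hmom hH heq ν hν
    obtain ⟨z1, W1, hWW, hM1⟩ := root_split W M hM
    have hz1 : z1 ∈ (cpx (Set.Icc a b))ᶜ := by
      rintro ⟨x, hx, hxz⟩
      apply hW x hx
      simp only at hxz
      rw [hWW, hxz]; simp
    have hne1 : ∀ x ∈ Set.Icc a b, (x : ℂ) - z1 ≠ 0 := fun x hx => by
      have := ne_of_cpx hz1 hx
      rwa [← neg_ne_zero, neg_sub]
    set P1 := P /ₘ (X - C z1) with hP1
    have hPP : P = (X - C z1) * P1 + C (P.eval z1) := by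
      have := modByMonic_add_div P (X - C z1)
      rw [modByMonic_X_sub_C_eq_C_eval] at this
      rw [hP1]
      linear_combination -this
    have hroot : P.eval z1 + ∫ x, f x / (z1 - (x : ℂ)) ∂μ = 0 := by
      rw [heq z1 hz1, hWW]; simp
    set f1 : ℝ → ℂ := fun x => f x / ((x : ℂ) - z1) with hf1d
    have hf1 : ContinuousOn f1 (Set.Icc a b) := by
      apply hf.div
      · fun_prop
      · exact hne1
    have hrel : ∀ z ∈ (cpx (Set.Icc a b))ᶜ, (z - z1) * ∫ x, f1 x / (z - (x : ℂ)) ∂μ =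
        (∫ x, f x / (z - (x : ℂ)) ∂μ) - ∫ x, f x / (z1 - (x : ℂ)) ∂μ := by
      intro z hz
      rw [← integral_const_mul, ← integral_sub (h.int (contOn_div hf hz)) (h.int (contOn_div hf hz1))]
      apply h.integral_congr
      intro x hx
      have e1 := ne_of_cpx hz hx
      have e2 := ne_of_cpx hz1 hx
      have e3 := hne1 x hx
      simp only [hf1d]
      field_simp
      ring
    have heq1 : ∀ z ∈ (cpx (Set.Icc a b))ᶜ,
        P1.eval z + ∫ x, f1 x / (z - (x : ℂ)) ∂μ = W1.eval z * H z := by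
      have hoff : ∀ z ∈ (cpx (Set.Icc a b))ᶜ, z ≠ z1 →
          P1.eval z + ∫ x, f1 x / (z - (x : ℂ)) ∂μ = W1.eval z * H z := by
        intro z hz hzz
        have hzz' : z - z1 ≠ 0 := sub_ne_zero.mpr hzz
        apply mul_left_cancel₀ hzz'
        have e1 := heq z hz
        have e2 := hrel z hz
        have e3 : P.eval z = (z - z1) * P1.eval z + P.eval z1 := by
          conv_lhs => rw [hPP]
          simp
        rw [mul_add, e2]
        have e4 : W.eval z = (z - z1) * W1.eval z := by rw [hWW]; simp
        rw [e4, e3] at e1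
        linear_combination e1 - hroot
      intro z hz
      by_cases hzz : z = z1
      · subst hzz
        refine eq_of_punctured (f := fun z => P1.eval z + ∫ x, f1 x / (z - (x : ℂ)) ∂μ)
          (g := fun z => W1.eval z * H z) (isOpen_cpx a b) hz ?_ ?_ hoff
        · exact (P1.continuous.continuousOn).add (cau_diff h hf1).continuousOn
        · exact (W1.continuous.continuousOn).mul hH
      · exact hoff z hz hzz
    have hW1 : ∀ x ∈ Set.Icc a b, W1.eval (x : ℂ) ≠ 0 := by
      intro x hx h0
      apply hW x hx
      rw [hWW]; simp [h0]
    have hfin : ∀ x : ℝ, (x : ℂ) ^ ν * (f x / W.eval (x : ℂ)) =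
        (x : ℂ) ^ ν * (f1 x / W1.eval (x : ℂ)) := by
      intro x
      rw [hWW]
      simp only [hf1d, eval_mul, eval_sub, eval_X, eval_C, div_div]
    simp_rw [hfin]
    rcases Nat.eq_zero_or_pos d with hd | hd
    · subst hd
      have hP0 : P = 0 := by
        by_contra hne
        exact absurd hP (not_lt.mpr (by simpa using zero_le_degree_iff.mpr hne))
      have hmom1 : ∀ ν < k + 1, ∫ x, (x : ℂ) ^ ν * f1 x ∂μ = 0 := by
        intro ν
        induction ν with
        | zero =>
          intro _
          have : ∫ x, (x : ℂ) ^ 0 * f1 x ∂μ = - ∫ x, f x / (z1 - (x : ℂ)) ∂μ := by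
            rw [← integral_neg]
            apply h.integral_congr
            intro x hx
            simp only [hf1d, pow_zero, one_mul]
            rw [← neg_sub, div_neg]
          rw [this]
          simp [hP0] at hroot
          simp [hroot]
        | succ ν ihν =>
          intro hlt
          have i1 := ihν (by omega)
          have i2 := hmom ν (by omega)
          have : ∫ x, (x : ℂ) ^ (ν + 1) * f1 x ∂μ =
              (∫ x, (x : ℂ) ^ ν * f x ∂μ) + z1 * ∫ x, (x : ℂ) ^ ν * f1 x ∂μ := by
            rw [← integral_const_mul, ← integral_add]
            · apply h.integral_congr
              intro x hx
              have := hne1 x hx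
              simp only [hf1d]
              field_simp
              ring
            · exact h.int (ContinuousOn.mul (by fun_prop) hf)
            · exact h.int (ContinuousOn.mul (by fun_prop) (ContinuousOn.mul (by fun_prop) hf1))
          rw [this, i1, i2]; simp
      refine ih W1 P1 f1 H 0 (k + 1) hM1 hW1 hf1 ?_ (Or.inl rfl) hmom1 hH heq1 ν (by omega)
      rw [hP1, hP0, zero_divByMonic, degree_zero]; exact WithBot.bot_lt_coe 0
    · have hk : k = 0 := by omega
      subst hk
      refine ih W1 P1 f1 H (d - 1) 0 hM1 hW1 hf1 ?_ (Or.inr rfl) (by simp) hH heq1 ν (by omega)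
      by_cases hPd : P.degree < 1
      · have : P1 = 0 := by
          rw [hP1]
          apply (divByMonic_eq_zero_iff (monic_X_sub_C z1)).mpr
          rwa [degree_X_sub_C]
        rw [this, degree_zero]; exact WithBot.bot_lt_coe _
      · have hP0 : P ≠ 0 := by rintro rfl; simp at hPd
        by_cases h10 : P1 = 0
        · rw [h10, degree_zero]; exact WithBot.bot_lt_coe _
        rw [degree_lt_iff_coeff_zero] at *
        intro m hm
        apply coeff_eq_zero_of_natDegree_lt
        have : P1.natDegree = P.natDegree - 1 := by
          rw [hP1, natDegree_divByMonic _ (monic_X_sub_C z1), natDegree_X_sub_C]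
        have h3 : P.natDegree < d := by
          by_contra hc
          push Not at hc
          exact hP0 (leadingCoeff_eq_zero.mp (hP _ hc))
        have h4 : 0 < P.natDegree := by
          rw [natDegree_pos_iff_degree_pos]
          by_contra hc
          push Not at hc
          exact hPd (lt_of_le_of_lt hc (by norm_num))
        omega

def RootsIn (W : ℝ[X]) (D : Set ℂ) : Prop := ∀ z : ℂ, aeval z W = 0 → z ∈ D

theorem fac_add {H : ℂ → ℂ} {D : Set ℂ} (hD : IsOpen D) (hH : DifferentiableOn ℂ H D)
    {z0 : ℂ} (hz : z0 ∈ D) (h0 : H z0 = 0) :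
    DifferentiableOn ℂ (dslope H z0) D ∧ ∀ z ∈ D, H z = (z - z0) * dslope H z0 z := by
  refine ⟨(Complex.differentiableOn_dslope (hD.mem_nhds hz)).mpr hH, fun z _ => ?_⟩
  have := sub_smul_dslope H z0 z
  rw [h0, sub_zero, smul_eq_mul] at this
  exact this.symm

theorem zero_of_mul {a b : ℝ} (hab : a < b) (q : ℝ[X]) (hq : q ≠ 0) {K : ℝ → ℝ}
    (hK : ContinuousOn K (Set.Icc a b)) (h : ∀ x ∈ Set.Icc a b, q.eval x * K x = 0) :
    ∀ x ∈ Set.Icc a b, K x = 0 := by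
  have hfin : {x : ℝ | q.eval x = 0}.Finite := by
    have := q.rootSet_finite ℝ
    refine this.subset ?_
    intro x hx
    rw [mem_rootSet]
    exact ⟨hq, by simpa using hx⟩
  have hdense : Dense ({x : ℝ | q.eval x = 0}ᶜ) := hfin.countable.dense_compl ℝ
  have h1 : Set.Ioo a b ⊆ closure (Set.Ioo a b ∩ {x : ℝ | q.eval x = 0}ᶜ) :=
    hdense.open_subset_closure_inter isOpen_Ioo
  have h2 : Set.Icc a b ⊆ closure (Set.Ioo a b ∩ {x : ℝ | q.eval x = 0}ᶜ) := by
    rw [← closure_Ioo hab.ne]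
    exact closure_minimal h1 isClosed_closure
  have h3 : Set.EqOn K (fun _ => 0) (Set.Ioo a b ∩ {x : ℝ | q.eval x = 0}ᶜ) := by
    rintro x ⟨hx, hx2⟩
    rcases mul_eq_zero.mp (h x (Set.Ioo_subset_Icc_self hx)) with h | h
    · exact absurd h hx2
    · exact h
  exact h3.of_subset_closure hK continuousOn_const
    (Set.inter_subset_left.trans Set.Ioo_subset_Icc_self) h2

theorem const_sign {a b : ℝ} {g : ℝ → ℝ} (hg : ContinuousOn g (Set.Icc a b))
    (h : ∀ x ∈ Set.Icc a b, g x ≠ 0) :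
    (∀ x ∈ Set.Icc a b, 0 < g x) ∨ (∀ x ∈ Set.Icc a b, g x < 0) := by
  by_contra hc
  push Not at hc
  obtain ⟨⟨x, hx, hx0⟩, ⟨y, hy, hy0⟩⟩ := hc
  obtain ⟨c, hc, hc0⟩ := isPreconnected_Icc.intermediate_value hx hy hg ⟨hx0, hy0⟩
  exact h c hc hc0

theorem poly_orth {μ : Measure ℝ} {a b : ℝ} (h : Good μ a b) {f : ℝ → ℂ}
    (hf : ContinuousOn f (Set.Icc a b)) {n : ℕ}
    (hm : ∀ ν < n, ∫ x, (x : ℂ) ^ ν * f x ∂μ = 0) (q : ℂ[X]) (hq : q.degree < (n : WithBot ℕ)) :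
    ∫ x, q.eval (x : ℂ) * f x ∂μ = 0 := by
  by_cases hq0 : q = 0
  · simp [hq0]
  have hn : q.natDegree < n := (natDegree_lt_iff_degree_lt hq0).mpr hq
  have : ∀ x : ℝ, q.eval (x : ℂ) * f x =
      ∑ i ∈ Finset.range n, q.coeff i * ((x : ℂ) ^ i * f x) := by
    intro x
    rw [eval_eq_sum_range' hn, Finset.sum_mul]
    exact Finset.sum_congr rfl fun i _ => by ring
  simp_rw [this]
  rw [integral_finsetSum]
  · apply Finset.sum_eq_zero
    intro i hi
    rw [integral_const_mul, hm i (Finset.mem_range.mp hi), mul_zero]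
  · intro i _
    exact h.int (ContinuousOn.mul (by fun_prop) (ContinuousOn.mul (by fun_prop) hf))

theorem aeval_ofReal' (W : ℝ[X]) (x : ℝ) : aeval (x : ℂ) W = ((W.eval x : ℝ) : ℂ) := by
  have := aeval_algebraMap_apply (A := ℝ) ℂ x W
  simpa using this

theorem eval_map_c (W : ℝ[X]) (z : ℂ) : (W.map (algebraMap ℝ ℂ)).eval z = aeval z W := by
  rw [eval_map_algebraMap]

theorem contOn_real {D : Set ℂ} {F : ℂ → ℂ} {a b : ℝ} (hF : ContinuousOn F D)
    (hsub : ∀ x ∈ Set.Icc a b, (x : ℂ) ∈ D) :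
    ContinuousOn (fun x : ℝ => F (x : ℂ)) (Set.Icc a b) :=
  hF.comp Complex.continuous_ofReal.continuousOn hsub

theorem sign_change {μ : Measure ℝ} {a b : ℝ} (h : Good μ a b) {D : Set ℂ} (hD : IsOpen D)
    (hsub : ∀ x ∈ Set.Icc a b, (x : ℂ) ∈ D) {F : ℂ → ℂ} (hF : DifferentiableOn ℂ F D)
    (hreal : ∀ x ∈ Set.Icc a b, (F (x : ℂ)).im = 0) {w : ℝ → ℝ}
    (hw : ContinuousOn w (Set.Icc a b))
    (hs : (∀ x ∈ Set.Icc a b, 0 ≤ w x) ∨ (∀ x ∈ Set.Icc a b, w x ≤ 0))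
    (hz : {x | x ∈ Set.Icc a b ∧ w x = 0}.Finite) (N : ℕ)
    (horth : ∀ ν < N, ∫ x, (x : ℂ) ^ ν * (F (x : ℂ) * (w x : ℂ)) ∂μ = 0) (M : ℕ) (hMN : M ≤ N) :
    ∃ (W : ℝ[X]) (H : ℂ → ℂ), W.natDegree = M ∧ W ≠ 0 ∧ RootsIn W (cpx (Set.Icc a b)) ∧
      DifferentiableOn ℂ H D ∧ (∀ x ∈ Set.Icc a b, (H (x : ℂ)).im = 0) ∧
      ∀ z ∈ D, F z = aeval z W * H z := by
  induction M with
  | zero =>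
    refine ⟨1, F, by simp, one_ne_zero, ?_, hF, hreal, by simp⟩
    intro z hz; simp at hz
  | succ M ih =>
    obtain ⟨W, H, hWM, hW0, hWr, hH, hHr, heq⟩ := ih (by omega)
    have hHc := contOn_real hH.continuousOn hsub
    have hzero : ∃ x ∈ Set.Icc a b, H (x : ℂ) = 0 := by
      by_contra hno
      push Not at hno
      have hre : ∀ x ∈ Set.Icc a b, ((H (x : ℂ)).re : ℂ) = H (x : ℂ) := by
        intro x hx
        apply Complex.ext <;> simp [hHr x hx]
      have hrec : ContinuousOn (fun x : ℝ => (H (x : ℂ)).re) (Set.Icc a b) :=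
        Complex.continuous_re.comp_continuousOn hHc
      have hsgn := const_sign hrec (fun x hx h0 => hno x hx (by rw [← hre x hx]; simp [h0]))
      set Φ : ℝ → ℝ := fun x => (W.eval x) ^ 2 * ((H (x : ℂ)).re * w x) with hΦ
      have hΦc : ContinuousOn Φ (Set.Icc a b) :=
        ContinuousOn.mul (by fun_prop) (hrec.mul hw)
      have hPhiInt : ∫ x, Φ x ∂μ = 0 := by
        have h1 : ∫ x, (Φ x : ℂ) ∂μ = 0 := by
          have h2 := poly_orth h (f := fun x => F (x : ℂ) * (w x : ℂ)) (n := N)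
            ((contOn_real hF.continuousOn hsub).mul (Complex.continuous_ofReal.comp_continuousOn hw))
            horth (W.map (algebraMap ℝ ℂ)) (by
              rw [degree_map, degree_eq_natDegree hW0, hWM]
              exact_mod_cast (by omega : M < N))
          rw [← h2]
          apply h.integral_congr
          intro x hx
          rw [eval_map_c, aeval_ofReal', heq x (hsub x hx), aeval_ofReal', ← hre x hx]
          simp only [hΦ]
          push_cast
          ring
        have h3 : ((∫ x, Φ x ∂μ : ℝ) : ℂ) = 0 := by rw [← integral_complex_ofReal]; exact h1
        exact_mod_cast h3
      have hnz : ∀ᵐ x ∂μ, Φ x = 0 := by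
        have hcase : (∀ x ∈ Set.Icc a b, 0 ≤ Φ x) ∨ (∀ x ∈ Set.Icc a b, 0 ≤ -Φ x) := by
          rcases hsgn with h1 | h1 <;> rcases hs with h2 | h2
          · left; intro x hx
            exact mul_nonneg (sq_nonneg _) (mul_nonneg (h1 x hx).le (h2 x hx))
          · right; intro x hx
            have := mul_nonneg (sq_nonneg (W.eval x)) (mul_nonneg (h1 x hx).le (neg_nonneg.mpr (h2 x hx)))
            simp only [hΦ]; linarith
          · right; intro x hx
            have := mul_nonneg (sq_nonneg (W.eval x)) (mul_nonneg (neg_nonneg.mpr (h1 x hx).le) (h2 x hx))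
            simp only [hΦ]; linarith
          · left; intro x hx
            exact mul_nonneg (sq_nonneg _) (mul_nonneg_of_nonpos_of_nonpos (h1 x hx).le (h2 x hx))
        rcases hcase with hc | hc
        · have := (integral_eq_zero_iff_of_nonneg_ae
            (by filter_upwards [h.ae] with x hx using hc x hx) (h.intR hΦc)).mp hPhiInt
          filter_upwards [this] with x hx using hx
        · have := (integral_eq_zero_iff_of_nonneg_ae (f := fun x => - Φ x)
            (by filter_upwards [h.ae] with x hx using hc x hx) (h.intR hΦc).neg).mp
            (by rw [integral_neg, hPhiInt, neg_zero])
          filter_upwards [this] with x hx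
          simpa using hx
      have hfin : {x : ℝ | W.eval x = 0}.Finite := by
        refine (W.rootSet_finite ℝ).subset ?_
        intro x hx
        rw [mem_rootSet]
        exact ⟨hW0, by simpa using hx⟩
      apply h.inf _ (hfin.union hz)
      have : ∀ᵐ x ∂μ, x ∈ {x : ℝ | W.eval x = 0} ∪ {x | x ∈ Set.Icc a b ∧ w x = 0} := by
        filter_upwards [h.ae, hnz] with x hx hx0
        rcases mul_eq_zero.mp hx0 with h1 | h1
        · left; exact pow_eq_zero_iff (two_ne_zero) |>.mp h1
        · right
          refine ⟨hx, ?_⟩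
          rcases mul_eq_zero.mp h1 with h2 | h2
          · exact absurd (by rw [← hre x hx, h2]; simp) (hno x hx)
          · exact h2
      exact this
    obtain ⟨x, hx, hx0⟩ := hzero
    obtain ⟨hd, hf⟩ := fac_add hD hH (hsub x hx) hx0
    have hW' : W * (X - C x) ≠ 0 := mul_ne_zero hW0 (X_sub_C_ne_zero x)
    have heq' : ∀ z ∈ D, F z = aeval z (W * (X - C x)) * dslope H x z := by
      intro z hz
      rw [heq z hz, hf z hz]; simp; ring
    refine ⟨W * (X - C x), dslope H x, ?_, hW', ?_, hd, ?_, heq'⟩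
    · rw [natDegree_mul hW0 (X_sub_C_ne_zero x), natDegree_X_sub_C, hWM]
    · intro z hz
      rw [map_mul, mul_eq_zero] at hz
      rcases hz with hz | hz
      · exact hWr z hz
      · simp at hz
        rw [sub_eq_zero] at hz
        rw [hz]; exact mem_cpx.mpr hx
    · refine zero_of_mul h.lt _ hW' (K := fun y : ℝ => (dslope H x y).im) ?_ ?_
      · exact Complex.continuous_im.comp_continuousOn (contOn_real hd.continuousOn hsub)
      · intro y hy
        have h1 := hreal y hy
        rw [heq' y (hsub y hy), aeval_ofReal', Complex.im_ofReal_mul] at h1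
        exact h1

theorem cau_poly {μ : Measure ℝ} {a b : ℝ} (h : Good μ a b) {φ : ℝ → ℂ}
    (hφ : ContinuousOn φ (Set.Icc a b)) (n : ℕ) : ∀ (p : ℂ[X]), p.degree < (n : WithBot ℕ) →
    ∃ Q : ℂ[X], Q.degree < (n : WithBot ℕ) ∧ ∀ z ∈ (cpx (Set.Icc a b))ᶜ,
      p.eval z * ∫ x, φ x / (z - (x : ℂ)) ∂μ =
        Q.eval z + ∫ x, p.eval (x : ℂ) * φ x / (z - (x : ℂ)) ∂μ := by
  induction n with
  | zero =>
    intro p hp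
    have : p = 0 := by
      by_contra hne
      exact absurd hp (not_lt.mpr (by simpa using zero_le_degree_iff.mpr hne))
    exact ⟨0, by simp, by simp [this]⟩
  | succ n ih =>
    intro p hp
    have hq : p.divX.degree < (n : WithBot ℕ) := by
      rw [degree_lt_iff_coeff_zero] at hp ⊢
      intro m hm
      rw [coeff_divX]
      exact hp _ (by omega)
    obtain ⟨Q, hQ, hQe⟩ := ih p.divX hq
    refine ⟨X * Q + C (∫ x, p.divX.eval (x : ℂ) * φ x ∂μ), ?_, ?_⟩
    · rw [degree_lt_iff_coeff_zero] at hQ ⊢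
      intro m hm
      obtain ⟨m', rfl⟩ : ∃ m', m = m' + 1 := ⟨m - 1, by omega⟩
      rw [coeff_add, coeff_X_mul, coeff_C_succ, hQ _ (by omega), add_zero]
    · intro z hz
      have hp' : ∀ z, p.eval z = z * p.divX.eval z + p.coeff 0 := by
        intro z
        conv_lhs => rw [← divX_mul_X_add p]
        simp; ring
      have hc : ContinuousOn (fun x : ℝ => p.divX.eval (x : ℂ) * φ x) (Set.Icc a b) :=
        ContinuousOn.mul (by fun_prop) hφ
      have e1 : ∫ x, p.eval (x : ℂ) * φ x / (z - (x : ℂ)) ∂μ =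
          z * (∫ x, p.divX.eval (x : ℂ) * φ x / (z - (x : ℂ)) ∂μ)
          + p.coeff 0 * (∫ x, φ x / (z - (x : ℂ)) ∂μ)
          - ∫ x, p.divX.eval (x : ℂ) * φ x ∂μ := by
        rw [← integral_const_mul, ← integral_const_mul, ← integral_add, ← integral_sub]
        · apply h.integral_congr
          intro x hx
          have := ne_of_cpx hz hx
          rw [hp']
          field_simp
          ring
        · apply Integrable.add
          · exact (h.int (contOn_div hc hz)).const_mul _
          · exact (h.int (contOn_div hφ hz)).const_mul _
        · exact h.int hc
        · exact (h.int (contOn_div hc hz)).const_mul _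
        · exact (h.int (contOn_div hφ hz)).const_mul _
      have e2 := hQe z hz
      rw [e1, hp' z]
      simp only [eval_add, eval_mul, eval_X, eval_C]
      linear_combination z * e2

theorem fubini_cau {μ μ' : Measure ℝ} {a b a' b' : ℝ} (h : Good μ a b) (h' : Good μ' a' b')
    (hdis : Set.Icc a b ∩ Set.Icc a' b' = ∅) {f g : ℝ → ℂ} (hf : ContinuousOn f (Set.Icc a b))
    (hg : ContinuousOn g (Set.Icc a' b')) :
    ∫ x, g x * (∫ t, f t / ((x : ℂ) - (t : ℂ)) ∂μ) ∂μ' =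
      - ∫ t, f t * (∫ x, g x / ((t : ℂ) - (x : ℂ)) ∂μ') ∂μ := by
  have := h.fin
  have := h'.fin
  have r1 : μ.restrict (Set.Icc a b) = μ := Measure.restrict_eq_self_of_ae_mem h.ae
  have r2 : μ'.restrict (Set.Icc a' b') = μ' := Measure.restrict_eq_self_of_ae_mem h'.ae
  have hI : Integrable (Function.uncurry fun (x : ℝ) (t : ℝ) => g x * (f t / ((x : ℂ) - (t : ℂ))))
      (μ'.prod μ) := by
    conv => arg 2; rw [← r1, ← r2]
    rw [Measure.prod_restrict]
    refine ContinuousOn.integrableOn_compact (isCompact_Icc.prod isCompact_Icc) ?_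
    apply ContinuousOn.mul
    · exact hg.comp continuous_fst.continuousOn (fun p hp => hp.1)
    · apply ContinuousOn.div
      · exact hf.comp continuous_snd.continuousOn (fun p hp => hp.2)
      · fun_prop
      · rintro ⟨x, t⟩ ⟨hx, ht⟩ h0
        have : x = t := Complex.ofReal_injective (sub_eq_zero.mp h0)
        subst this
        exact (Set.eq_empty_iff_forall_notMem.mp hdis) x ⟨ht, hx⟩
  simp_rw [← integral_const_mul]
  rw [integral_integral_swap hI, ← integral_neg]
  congr 1; ext t
  rw [← integral_neg]
  congr 1; ext x
  rw [← neg_sub (x : ℂ) (t : ℂ), div_neg]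
  ring

theorem poly_fac {D : Set ℂ} (hD : IsOpen D) {H : ℂ → ℂ} (hH : ContinuousOn H D) (M : ℕ) :
    ∀ (p W : ℂ[X]), W.natDegree = M → (∀ z, W.eval z = 0 → z ∈ D) →
    p.degree < (M : WithBot ℕ) → (∀ z ∈ D, p.eval z = W.eval z * H z) → p = 0 := by
  induction M with
  | zero =>
    intro p W _ _ hp _
    by_contra hne
    exact absurd hp (not_lt.mpr (by simpa using zero_le_degree_iff.mpr hne))
  | succ M ih =>
    intro p W hM hr hp heq
    obtain ⟨z1, W1, hWW, hM1⟩ := root_split W M hM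
    have hz1 : z1 ∈ D := hr z1 (by rw [hWW]; simp)
    obtain ⟨p1, hp1⟩ := dvd_iff_isRoot.mpr (show p.IsRoot z1 by
      rw [IsRoot, heq z1 hz1, hWW]; simp)
    have : p1 = 0 := by
      apply ih p1 W1 hM1
      · intro z hz; exact hr z (by rw [hWW]; simp [hz])
      · by_cases h0 : p1 = 0
        · rw [h0, degree_zero]; exact WithBot.bot_lt_coe _
        rw [hp1, degree_mul, degree_X_sub_C, degree_eq_natDegree h0] at hp
        rw [degree_eq_natDegree h0]
        have : 1 + p1.natDegree < M + 1 := by exact_mod_cast hp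
        exact_mod_cast (by omega : p1.natDegree < M)
      · have hoff : ∀ z ∈ D, z ≠ z1 → p1.eval z = W1.eval z * H z := by
          intro z hz hne
          apply mul_left_cancel₀ (sub_ne_zero.mpr hne)
          have := heq z hz
          rw [hp1, hWW] at this
          simp only [eval_mul, eval_sub, eval_X, eval_C] at this
          linear_combination this
        intro z hz
        by_cases hne : z = z1
        · subst hne
          exact eq_of_punctured (f := fun z => p1.eval z) (g := fun z => W1.eval z * H z) hD hz
            p1.continuous.continuousOn (W1.continuous.continuousOn.mul hH) hoff
        · exact hoff z hz hne
    rw [hp1, this, mul_zero]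

def SgnOn (V : ℝ[X]) (a b : ℝ) : Prop :=
  (∀ x ∈ Set.Icc a b, 0 ≤ V.eval x) ∨ (∀ x ∈ Set.Icc a b, V.eval x ≤ 0)

theorem roots_finite {V : ℝ[X]} (hV : V ≠ 0) : {x : ℝ | V.eval x = 0}.Finite := by
  refine (V.rootSet_finite ℝ).subset ?_
  intro x hx
  rw [mem_rootSet]
  exact ⟨hV, by simpa using hx⟩

theorem weighted {μ : Measure ℝ} {a b : ℝ} (h : Good μ a b) {G : ℂ → ℂ} {D' : Set ℂ}
    (hD' : IsOpen D') (hsub : ∀ x ∈ Set.Icc a b, (x : ℂ) ∈ D')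
    (hGr : ∀ x ∈ Set.Icc a b, (G (x : ℂ)).im = 0) {W V : ℝ[X]}
    (hWr : RootsIn W (cpx (Set.Icc a b))ᶜ)
    (hV0 : V ≠ 0) (hVs : SgnOn V a b) (hVf : HasFac G D' V) (N : ℕ)
    (horth : ∀ ν < N, ∫ x, (x : ℂ) ^ ν * (G (x : ℂ) / aeval (x : ℂ) W) ∂μ = 0) :
    ∃ W' : ℝ[X], W'.natDegree = N ∧ W' ≠ 0 ∧ RootsIn W' (cpx (Set.Icc a b)) ∧
      HasFac G D' (V * W') := by
  obtain ⟨K, hK, hKe⟩ := hVf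
  have hWx : ∀ x ∈ Set.Icc a b, W.eval x ≠ 0 := by
    intro x hx h0
    exact hWr x (by rw [aeval_ofReal', h0]; simp) (mem_cpx.mpr hx)
  have hKr : ∀ x ∈ Set.Icc a b, (K (x : ℂ)).im = 0 := by
    refine zero_of_mul h.lt V hV0 (K := fun x : ℝ => (K x).im)
      (Complex.continuous_im.comp_continuousOn (contOn_real hK.continuousOn hsub)) ?_
    intro x hx
    have := hGr x hx
    rwa [hKe x (hsub x hx), aeval_ofReal', Complex.im_ofReal_mul] at this
  have hws := const_sign (g := fun x => W.eval x) (W.continuous.continuousOn) hWx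
  have hsc := sign_change h hD' hsub hK hKr
    (w := fun x => V.eval x / W.eval x)
    (ContinuousOn.div V.continuous.continuousOn W.continuous.continuousOn hWx) ?_ ?_ N ?_ N le_rfl
  · obtain ⟨W', H, h1, h2, h3, h4, h5, h6⟩ := hsc
    refine ⟨W', h1, h2, h3, H, h4, ?_⟩
    intro z hz
    rw [hKe z hz, h6 z hz, map_mul]; ring
  · rcases hws with hw | hw <;> rcases hVs with hv | hv
    · left; intro x hx; exact div_nonneg (hv x hx) (hw x hx).le
    · right; intro x hx; exact div_nonpos_of_nonpos_of_nonneg (hv x hx) (hw x hx).le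
    · right; intro x hx; exact div_nonpos_of_nonneg_of_nonpos (hv x hx) (hw x hx).le
    · left; intro x hx; exact div_nonneg_of_nonpos (hv x hx) (hw x hx).le
  · refine (roots_finite hV0).subset ?_
    rintro x ⟨hx, h0⟩
    rcases div_eq_zero_iff.mp h0 with h0 | h0
    · exact h0
    · exact absurd h0 (hWx x hx)
  · intro ν hν
    rw [← horth ν hν]
    apply h.integral_congr
    intro x hx
    rw [hKe x (hsub x hx), aeval_ofReal', aeval_ofReal']
    push_cast
    ring

theorem up_step {μ : Measure ℝ} {a b : ℝ} (h : Good μ a b) {F G : ℂ → ℂ} {D' : Set ℂ}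
    (hD' : IsOpen D') (hsub : ∀ x ∈ Set.Icc a b, (x : ℂ) ∈ D') (hG : DifferentiableOn ℂ G D')
    (hGr : ∀ x ∈ Set.Icc a b, (G (x : ℂ)).im = 0) {e : ℂ} (he : e ≠ 0) {P : ℂ[X]} {d k : ℕ}
    (hP : P.degree < (d : WithBot ℕ)) (hdk : d = 0 ∨ k = 0)
    (hmom : ∀ ν < k, ∫ x, (x : ℂ) ^ ν * G (x : ℂ) ∂μ = 0)
    (hrep : ∀ z ∈ (cpx (Set.Icc a b))ᶜ,
      F z = P.eval z + e * ∫ x, G (x : ℂ) / (z - (x : ℂ)) ∂μ) {W V : ℝ[X]}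
    (hWr : RootsIn W (cpx (Set.Icc a b))ᶜ) (hfac : HasFac F (cpx (Set.Icc a b))ᶜ W)
    (hV0 : V ≠ 0) (hVs : SgnOn V a b) (hVf : HasFac G D' V) (N : ℕ)
    (hN : N + d ≤ W.natDegree + k) :
    ∃ W' : ℝ[X], W'.natDegree = N ∧ W' ≠ 0 ∧ RootsIn W' (cpx (Set.Icc a b)) ∧
      HasFac G D' (V * W') := by
  obtain ⟨H, hH, hHe⟩ := hfac
  apply weighted h hD' hsub hGr hWr hV0 hVs hVf
  intro ν hν
  have := cauchy_step h W.natDegree (W.map (algebraMap ℝ ℂ)) P (fun x => e * G (x : ℂ)) H d k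
    (natDegree_map _) ?_ ?_ hP hdk ?_ hH.continuousOn ?_ ν (by omega)
  · have h2 : ∀ x : ℝ, (x : ℂ) ^ ν * (e * G (x : ℂ) / (W.map (algebraMap ℝ ℂ)).eval (x : ℂ)) =
        e * ((x : ℂ) ^ ν * (G (x : ℂ) / aeval (x : ℂ) W)) := by
      intro x; rw [eval_map_c]; ring
    simp_rw [h2] at this
    rw [integral_const_mul] at this
    exact (mul_eq_zero.mp this).resolve_left he
  · intro x hx h0
    rw [eval_map_c] at h0
    exact hWr x h0 (mem_cpx.mpr hx)
  · exact continuousOn_const.mul (contOn_real hG.continuousOn hsub)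
  · intro ν hν
    have h2 : ∀ x : ℝ, (x : ℂ) ^ ν * (e * G (x : ℂ)) = e * ((x : ℂ) ^ ν * G (x : ℂ)) := by
      intro x; ring
    simp_rw [h2]
    rw [integral_const_mul, hmom ν hν, mul_zero]
  · intro z hz
    rw [eval_map_c, ← hHe z hz, hrep z hz, ← integral_const_mul]
    simp_rw [mul_div_assoc]

/-! ### Facts about Nikishin systems -/

theorem NikSys.good {m : ℕ} (S : NikSys m) {j : ℕ} (hj : j ≤ m) :
    Good (S.μ j) (S.a j) (S.b j) := by
  have hsub : msupport (S.μ j) ⊆ Set.Icc (S.a j) (S.b j) := by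
    rw [← S.hull j hj]; exact subset_convexHull ℝ _
  refine ⟨S.fin j, ?_, ?_, ?_⟩
  · have h0 : S.μ j (msupport (S.μ j))ᶜ = 0 := by
      apply measure_null_of_locally_null
      intro x hx
      simp only [msupport, Set.mem_compl_iff, Set.mem_ofPred_eq, not_forall] at hx
      obtain ⟨U, hU, hxU, h0⟩ := hx
      exact ⟨U, mem_nhdsWithin_of_mem_nhds (hU.mem_nhds hxU), not_not.mp h0⟩
    exact measure_mono_null (Set.compl_subset_compl.mpr hsub) h0
  · by_contra hc
    push Not at hc
    exact S.inf j hj ((Set.subsingleton_Icc_of_ge hc).finite.subset hsub)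
  · intro s hs h0
    refine S.inf j hj (hs.subset ?_)
    intro x hx
    by_contra hxs
    exact hx sᶜ hs.isClosed.isOpen_compl hxs h0

def Dom {m : ℕ} (S : NikSys m) (j : ℕ) : Set ℂ :=
  if j < m then (cpx (Set.Icc (S.a (j+1)) (S.b (j+1))))ᶜ else (Set.univ : Set ℂ)

theorem isOpen_Dom {m : ℕ} (S : NikSys m) (j : ℕ) : IsOpen (Dom S j) := by
  unfold Dom
  split_ifs
  · exact isOpen_cpx _ _
  · exact isOpen_univ

theorem NikSys.sub_next {m : ℕ} (S : NikSys m) {j : ℕ} (hj : j < m) :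
    ∀ x ∈ Set.Icc (S.a j) (S.b j), (x : ℂ) ∈ (cpx (Set.Icc (S.a (j+1)) (S.b (j+1))))ᶜ := by
  intro x hx h
  exact (Set.eq_empty_iff_forall_notMem.mp (S.disj j hj)) x ⟨hx, mem_cpx.mp h⟩

theorem NikSys.sub_prev {m : ℕ} (S : NikSys m) {j : ℕ} (hj : j < m) :
    ∀ x ∈ Set.Icc (S.a (j+1)) (S.b (j+1)), (x : ℂ) ∈ (cpx (Set.Icc (S.a j) (S.b j)))ᶜ := by
  intro x hx h
  exact (Set.eq_empty_iff_forall_notMem.mp (S.disj j hj)) x ⟨mem_cpx.mp h, hx⟩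

theorem sub_Dom {m : ℕ} (S : NikSys m) (j : ℕ) :
    ∀ x ∈ Set.Icc (S.a j) (S.b j), (x : ℂ) ∈ Dom S j := by
  unfold Dom
  split_ifs with h
  · exact S.sub_next h
  · intro x _; trivial

theorem wt_rec (μ : ℕ → Measure ℝ) (e : ℕ → ℝ) {j k : ℕ} (hjk : j < k) (z : ℂ) :
    wt μ e j k z = (e (j+1) : ℂ) * ∫ t, wt μ e (j+1) k (t : ℂ) / (z - (t : ℂ)) ∂(μ (j+1)) := by
  by_cases h : j + 1 < k
  · obtain ⟨g, rfl⟩ : ∃ g, k = j + 1 + 1 + g := ⟨k - (j + 1 + 1), by omega⟩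
    have e1 : j + 1 + 1 + g - (j + 1) = g + 1 := by omega
    have e2 : j + 1 + 1 + g - (j + 1 + 1) = g := by omega
    simp only [wt, hjk, h, if_true, e1, e2, nikhat]
  · have : k = j + 1 := by omega
    subst this
    simp [wt, nikhat]

theorem wt_diff {m : ℕ} (S : NikSys m) {k : ℕ} (hk : k ≤ m) (g : ℕ) :
    ∀ j, k - j = g → DifferentiableOn ℂ (wt S.μ S.e j k) (Dom S j) := by
  induction g with
  | zero =>
    intro j hj
    have : ¬ j < k := by omega
    have h2 : wt S.μ S.e j k = fun _ => 1 := by ext z; simp [wt, this]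
    rw [h2]; exact differentiableOn_const _
  | succ g ih =>
    intro j hj
    have hjk : j < k := by omega
    have h1 := ih (j + 1) (by omega)
    have h2 : wt S.μ S.e j k = fun z => (S.e (j+1) : ℂ) *
        ∫ t, wt S.μ S.e (j+1) k (t : ℂ) / (z - (t : ℂ)) ∂(S.μ (j+1)) := by
      ext z; exact wt_rec _ _ hjk z
    rw [h2]
    have h3 : Dom S j = (cpx (Set.Icc (S.a (j+1)) (S.b (j+1))))ᶜ := by
      simp [Dom, show j < m by omega]
    rw [h3]
    exact (cau_diff (S.good (by omega)) (contOn_real h1.continuousOn (sub_Dom S (j+1)))).const_mul _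

theorem wt_contOn {m : ℕ} (S : NikSys m) {k : ℕ} (hk : k ≤ m) (j : ℕ) :
    ContinuousOn (fun x : ℝ => wt S.μ S.e j k (x : ℂ)) (Set.Icc (S.a j) (S.b j)) :=
  contOn_real (wt_diff S hk _ j rfl).continuousOn (sub_Dom S j)

theorem linForm_diff {m : ℕ} (S : NikSys m) (A : ℕ → ℝ[X]) (j : ℕ) :
    DifferentiableOn ℂ (linForm S.μ S.e m j A) (Dom S j) := by
  unfold linForm
  apply DifferentiableOn.fun_sum
  intro k hk
  rw [Finset.mem_Icc] at hk
  apply DifferentiableOn.mul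
  · exact (Polynomial.differentiable_aeval (A k)).differentiableOn
  · exact wt_diff S hk.2 _ j rfl

theorem linForm_contOn {m : ℕ} (S : NikSys m) (A : ℕ → ℝ[X]) (j : ℕ) :
    ContinuousOn (fun x : ℝ => linForm S.μ S.e m j A (x : ℂ)) (Set.Icc (S.a j) (S.b j)) :=
  contOn_real (linForm_diff S A j).continuousOn (sub_Dom S j)

theorem Decr.le {m : ℕ} {n : ℕ → ℕ} (h : Decr m n) {j k : ℕ} (hjk : j ≤ k) (hk : k ≤ m) :
    n k ≤ n j := by
  induction k, hjk using Nat.le_induction with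
  | base => exact le_rfl
  | succ k hjk ih => exact (h k (by omega)).trans (ih (by omega))

theorem sum_Icc_head {M : Type*} [AddCommMonoid M] {j m : ℕ} (h : j ≤ m) (f : ℕ → M) :
    ∑ k ∈ Finset.Icc j m, f k = f j + ∑ k ∈ Finset.Icc (j+1) m, f k := by
  have : Finset.Icc j m = insert j (Finset.Icc (j+1) m) := by
    ext x; simp only [Finset.mem_Icc, Finset.mem_insert]; omega
  rw [this, Finset.sum_insert (by simp)]

theorem linForm_head {μ : ℕ → Measure ℝ} {e : ℕ → ℝ} {m j : ℕ} (h : j ≤ m) (A : ℕ → ℝ[X]) (z : ℂ) :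
    linForm μ e m j A z = aeval z (A j) +
      ∑ k ∈ Finset.Icc (j+1) m, aeval z (A k) * wt μ e j k z := by
  unfold linForm
  rw [sum_Icc_head h]
  simp [wt]

theorem linForm_rep {m : ℕ} (S : NikSys m) (A : ℕ → ℝ[X]) {n : ℕ → ℕ} (hn : Decr m n)
    (hdeg : ∀ j ≤ m, (A j).degree < (n j : WithBot ℕ)) {j : ℕ} (hj : j < m) :
    ∃ P : ℂ[X], P.degree < (n j : WithBot ℕ) ∧
      ∀ z ∈ (cpx (Set.Icc (S.a (j+1)) (S.b (j+1))))ᶜ,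
        linForm S.μ S.e m j A z = P.eval z + (S.e (j+1) : ℂ) *
          ∫ x, linForm S.μ S.e m (j+1) A (x : ℂ) / (z - (x : ℂ)) ∂(S.μ (j+1)) := by
  have hg := S.good (show j + 1 ≤ m by omega)
  have hdeg' : ∀ k ∈ Finset.Icc j m, ((A k).map (algebraMap ℝ ℂ)).degree < (n j : WithBot ℕ) := by
    intro k hk
    rw [Finset.mem_Icc] at hk
    rw [degree_map]
    exact (hdeg k hk.2).trans_le (by exact_mod_cast hn.le hk.1 hk.2)
  have hQ : ∀ k, ∃ Q : ℂ[X], k ∈ Finset.Icc (j+1) m → Q.degree < (n j : WithBot ℕ) ∧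
      ∀ z ∈ (cpx (Set.Icc (S.a (j+1)) (S.b (j+1))))ᶜ,
      ((A k).map (algebraMap ℝ ℂ)).eval z * ∫ x, wt S.μ S.e (j+1) k (x : ℂ) / (z - (x : ℂ)) ∂(S.μ (j+1)) =
        Q.eval z + ∫ x, ((A k).map (algebraMap ℝ ℂ)).eval (x : ℂ) * wt S.μ S.e (j+1) k (x : ℂ) / (z - (x : ℂ)) ∂(S.μ (j+1)) := by
    intro k
    by_cases hk : k ∈ Finset.Icc (j+1) m
    · have hk' := Finset.mem_Icc.mp hk
      obtain ⟨Q, h1, h2⟩ := cau_poly hg (wt_contOn S hk'.2 (j+1)) (n j) _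
        (hdeg' k (Finset.mem_Icc.mpr ⟨by omega, hk'.2⟩))
      exact ⟨Q, fun _ => ⟨h1, h2⟩⟩
    · exact ⟨0, fun h => absurd h hk⟩
  choose Q hQ using hQ
  refine ⟨(A j).map (algebraMap ℝ ℂ) + ∑ k ∈ Finset.Icc (j+1) m, C (S.e (j+1) : ℂ) * Q k, ?_, ?_⟩
  · rw [degree_lt_iff_coeff_zero]
    intro i hi
    rw [coeff_add, finsetSum_coeff,
      (degree_lt_iff_coeff_zero _ _).mp (hdeg' j (Finset.mem_Icc.mpr ⟨le_rfl, hj.le⟩)) i hi, zero_add]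
    apply Finset.sum_eq_zero
    intro k hk
    rw [coeff_C_mul, (degree_lt_iff_coeff_zero _ _).mp (hQ k hk).1 i hi, mul_zero]
  · intro z hz
    rw [linForm_head hj.le]
    have e1 : ∀ x : ℝ, linForm S.μ S.e m (j+1) A (x : ℂ) / (z - (x : ℂ)) =
        ∑ k ∈ Finset.Icc (j+1) m, ((A k).map (algebraMap ℝ ℂ)).eval (x : ℂ) *
          wt S.μ S.e (j+1) k (x : ℂ) / (z - (x : ℂ)) := by
      intro x
      unfold linForm
      rw [Finset.sum_div]
      simp_rw [eval_map_c]
    simp_rw [e1]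
    rw [integral_finsetSum]
    · rw [eval_add, eval_finsetSum, eval_map_c, Finset.mul_sum, add_assoc, ← Finset.sum_add_distrib]
      congr 1
      apply Finset.sum_congr rfl
      intro k hk
      have h2 := (hQ k hk).2 z hz
      have hk' := Finset.mem_Icc.mp hk
      rw [wt_rec _ _ (show j < k by omega), eval_mul, eval_C, ← mul_add, ← h2, eval_map_c]
      ring
    · intro k hk
      have hk' := Finset.mem_Icc.mp hk
      exact hg.int (contOn_div (ContinuousOn.mul (by fun_prop) (wt_contOn S hk'.2 (j+1))) hz)

/-! ### Conjugation symmetry -/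

def ConjS (F : ℂ → ℂ) : Prop := ∀ z, F (starRingEnd ℂ z) = starRingEnd ℂ (F z)

theorem ConjS.real {F : ℂ → ℂ} (h : ConjS F) (x : ℝ) : (F (x : ℂ)).im = 0 := by
  have := h x
  rw [Complex.conj_ofReal] at this
  exact Complex.conj_eq_iff_im.mp this.symm

theorem ConjS.cau {F : ℂ → ℂ} (h : ConjS F) (μ : Measure ℝ) (e : ℝ) :
    ConjS (fun z => (e : ℂ) * ∫ x, F (x : ℂ) / (z - (x : ℂ)) ∂μ) := by
  intro z
  simp only [map_mul, Complex.conj_ofReal]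
  rw [← integral_conj]
  congr 2; ext x
  rw [map_div₀, map_sub, Complex.conj_ofReal, ← h x, Complex.conj_ofReal]

theorem wt_conj (μ : ℕ → Measure ℝ) (e : ℕ → ℝ) (k : ℕ) (g : ℕ) :
    ∀ j, k - j = g → ConjS (wt μ e j k) := by
  induction g with
  | zero =>
    intro j hj
    have : ¬ j < k := by omega
    intro z; simp [wt, this]
  | succ g ih =>
    intro j hj
    have h2 : wt μ e j k = fun z => (e (j+1) : ℂ) *
        ∫ t, wt μ e (j+1) k (t : ℂ) / (z - (t : ℂ)) ∂(μ (j+1)) := by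
      ext z; exact wt_rec _ _ (by omega) z
    rw [h2]
    exact (ih (j+1) (by omega)).cau _ _

theorem linForm_conj (μ : ℕ → Measure ℝ) (e : ℕ → ℝ) (m j : ℕ) (A : ℕ → ℝ[X]) :
    ConjS (linForm μ e m j A) := by
  intro z
  unfold linForm
  rw [map_sum]
  apply Finset.sum_congr rfl
  intro k _
  rw [map_mul, wt_conj μ e k _ j rfl z, aeval_conj]

theorem linFormNeg_conj (μ : ℕ → Measure ℝ) (e : ℕ → ℝ) {F : ℂ → ℂ} (hF : ConjS F) (j : ℕ) :
    ConjS (linFormNeg μ e F j) := by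
  induction j with
  | zero => exact hF
  | succ j ih => exact ih.cau _ _

/-! ### The chain of linear forms -/

structure Cfg (m₁ m₂ : ℕ) (S1 : NikSys m₁) (S2 : NikSys m₂) (n1 n2 : ℕ → ℕ)
    (A : ℕ → ℝ[X]) : Prop where
  base : S1.μ 0 = S2.μ 0
  h1 : Decr m₁ n1
  h2 : Decr m₂ n2
  deg : ∀ j ≤ m₁, (A j).degree < (n1 j : WithBot ℕ)
  orth : ∀ k ≤ m₂, ∀ ν < n2 k,
    sInt S2.μ S2.e 0 k (fun x => (x : ℂ) ^ ν * linForm S1.μ S1.e m₁ 0 A (x : ℂ)) = 0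

def DN {m₁ m₂ : ℕ} (S1 : NikSys m₁) (S2 : NikSys m₂) : ℕ → Set ℂ
  | 0 => Dom S1 0
  | i + 1 => (cpx (Set.Icc (S2.a i) (S2.b i)))ᶜ

theorem isOpen_DN {m₁ m₂ : ℕ} (S1 : NikSys m₁) (S2 : NikSys m₂) (i : ℕ) : IsOpen (DN S1 S2 i) := by
  cases i with
  | zero => exact isOpen_Dom S1 0
  | succ i => exact isOpen_cpx _ _

theorem base_ab {m₁ m₂ : ℕ} (S1 : NikSys m₁) (S2 : NikSys m₂) (hb : S1.μ 0 = S2.μ 0) :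
    S1.a 0 = S2.a 0 ∧ S1.b 0 = S2.b 0 := by
  have e1 := S1.hull 0 (Nat.zero_le _)
  have e2 := S2.hull 0 (Nat.zero_le _)
  rw [hb, e2] at e1
  have l1 := (S1.good (Nat.zero_le _)).lt.le
  have l2 := (S2.good (Nat.zero_le _)).lt.le
  constructor
  · rw [← csInf_Icc l1, ← csInf_Icc l2, e1]
  · rw [← csSup_Icc l1, ← csSup_Icc l2, e1]

theorem sub_DN {m₁ m₂ : ℕ} (S1 : NikSys m₁) (S2 : NikSys m₂) (hb : S1.μ 0 = S2.μ 0) {i : ℕ}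
    (hi : i ≤ m₂) : ∀ x ∈ Set.Icc (S2.a i) (S2.b i), (x : ℂ) ∈ DN S1 S2 i := by
  cases i with
  | zero =>
    obtain ⟨e1, e2⟩ := base_ab S1 S2 hb
    rw [← e1, ← e2]; exact sub_Dom S1 0
  | succ i => exact S2.sub_prev (by omega)

theorem NikSys.e_ne {m : ℕ} (S : NikSys m) (j : ℕ) : (S.e j : ℂ) ≠ 0 := by
  rcases S.sgn j with h | h <;> simp [h]

theorem NikSys.e_sq {m : ℕ} (S : NikSys m) (j : ℕ) : (S.e j : ℂ) * (S.e j : ℂ) = 1 := by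
  rcases S.sgn j with h | h <;> simp [h]

theorem L_diff {m₁ m₂ : ℕ} (S1 : NikSys m₁) (S2 : NikSys m₂) (hb : S1.μ 0 = S2.μ 0)
    (A : ℕ → ℝ[X]) (i : ℕ) : i ≤ m₂ →
    DifferentiableOn ℂ (linFormNeg S2.μ S2.e (linForm S1.μ S1.e m₁ 0 A) i) (DN S1 S2 i) := by
  induction i with
  | zero => intro _; exact linForm_diff S1 A 0
  | succ i ih =>
    intro hi
    exact (cau_diff (S2.good (by omega)) (contOn_real (ih (by omega)).continuousOn
      (sub_DN S1 S2 hb (by omega)))).const_mul _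

theorem L_contOn {m₁ m₂ : ℕ} (S1 : NikSys m₁) (S2 : NikSys m₂) (hb : S1.μ 0 = S2.μ 0)
    (A : ℕ → ℝ[X]) {i : ℕ} (hi : i ≤ m₂) :
    ContinuousOn (fun x : ℝ => linFormNeg S2.μ S2.e (linForm S1.μ S1.e m₁ 0 A) i (x : ℂ))
      (Set.Icc (S2.a i) (S2.b i)) :=
  contOn_real (L_diff S1 S2 hb A i hi).continuousOn (sub_DN S1 S2 hb hi)

theorem hasFac_one {F : ℂ → ℂ} {D : Set ℂ} (h : DifferentiableOn ℂ F D) : HasFac F D 1 :=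
  ⟨F, h, by simp⟩

theorem sgnOn_one (a b : ℝ) : SgnOn 1 a b := Or.inl (by simp)

section
variable {m₁ m₂ : ℕ} {S1 : NikSys m₁} {S2 : NikSys m₂} {n1 n2 : ℕ → ℕ} {A : ℕ → ℝ[X]}

theorem L_orth (c : Cfg m₁ m₂ S1 S2 n1 n2 A) (i : ℕ) : i ≤ m₂ → ∀ k, i ≤ k → k ≤ m₂ → ∀ ν < n2 k,
    ∫ x, (x : ℂ) ^ ν * (linFormNeg S2.μ S2.e (linForm S1.μ S1.e m₁ 0 A) i (x : ℂ) *
      wt S2.μ S2.e i k (x : ℂ)) ∂(S2.μ i) = 0 := by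
  induction i with
  | zero =>
    intro _ k _ hk ν hν
    have := c.orth k hk ν hν
    unfold sInt at this
    have := (mul_eq_zero.mp this).resolve_left (S2.e_ne 0)
    rw [← this]
    congr 1; ext x
    simp only [linFormNeg]
    ring
  | succ i ih =>
    intro hi k hik hk ν hν
    have ih := ih (by omega)
    have hg := S2.good (show i ≤ m₂ by omega)
    have hg' := S2.good hi
    set L := linFormNeg S2.μ S2.e (linForm S1.μ S1.e m₁ 0 A) i with hL
    have hLc : ContinuousOn (fun x : ℝ => L (x : ℂ)) (Set.Icc (S2.a i) (S2.b i)) :=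
      L_contOn S1 S2 c.base A (by omega)
    have hwc := wt_contOn S2 hk (i+1)
    have e0 : ∀ x : ℝ, (x : ℂ) ^ ν * (linFormNeg S2.μ S2.e (linForm S1.μ S1.e m₁ 0 A) (i+1) (x : ℂ) *
        wt S2.μ S2.e (i+1) k (x : ℂ)) = (S2.e i : ℂ) * (((x : ℂ) ^ ν * wt S2.μ S2.e (i+1) k (x : ℂ)) *
        ∫ t, L (t : ℂ) / ((x : ℂ) - (t : ℂ)) ∂(S2.μ i)) := by
      intro x
      simp only [linFormNeg, ← hL]
      ring
    simp_rw [e0]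
    rw [integral_const_mul, fubini_cau hg hg' (S2.disj i (by omega)) (f := fun t => L (t : ℂ)) hLc
      (g := fun x => (x : ℂ) ^ ν * wt S2.μ S2.e (i+1) k (x : ℂ))
      (ContinuousOn.mul (by fun_prop) hwc)]
    obtain ⟨Q, hQ, hQe⟩ := cau_poly hg' hwc (n2 k) (X ^ ν) (by
      rw [degree_X_pow]; exact_mod_cast hν)
    have e1 : ∫ t, L (t : ℂ) * (∫ x, (x : ℂ) ^ ν * wt S2.μ S2.e (i+1) k (x : ℂ) / ((t : ℂ) - (x : ℂ))
        ∂(S2.μ (i+1))) ∂(S2.μ i) = (S2.e (i+1) : ℂ) * (∫ t, (t : ℂ) ^ ν * (L (t : ℂ) *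
        wt S2.μ S2.e i k (t : ℂ)) ∂(S2.μ i)) - ∫ t, Q.eval (t : ℂ) * L (t : ℂ) ∂(S2.μ i) := by
      rw [← integral_const_mul, ← integral_sub]
      · apply hg.integral_congr
        intro t ht
        have e2 := hQe t (S2.sub_next (by omega) t ht)
        simp only [eval_pow, eval_X] at e2
        rw [wt_rec _ _ (show i < k by omega)]
        have e3 := S2.e_sq (i+1)
        linear_combination (-(L (t : ℂ))) * e2 - (t : ℂ) ^ ν * L (t : ℂ) * (∫ x, wt S2.μ S2.e (i+1) k (x : ℂ) / ((t : ℂ) - (x : ℂ)) ∂(S2.μ (i+1))) * e3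
      · exact (hg.int (ContinuousOn.mul (by fun_prop) (hLc.mul (wt_contOn S2 hk i)))).const_mul _
      · exact hg.int (ContinuousOn.mul (by fun_prop) hLc)
    have e4 := poly_orth hg hLc (n := n2 i) (by
      intro ν hν
      have := ih i le_rfl (by omega) ν hν
      simpa [wt] using this) Q (hQ.trans_le (by exact_mod_cast c.h2.le (by omega) hk))
    rw [e1, e4, ih k (by omega) hk ν hν]
    simp

theorem L_mom (c : Cfg m₁ m₂ S1 S2 n1 n2 A) {i : ℕ} (hi : i ≤ m₂) : ∀ ν < n2 i,
    ∫ x, (x : ℂ) ^ ν * (linFormNeg S2.μ S2.e (linForm S1.μ S1.e m₁ 0 A) i (x : ℂ)) ∂(S2.μ i) = 0 := by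
  intro ν hν
  have := L_orth c i hi i le_rfl hi ν hν
  simpa [wt] using this

theorem neg_step (c : Cfg m₁ m₂ S1 S2 n1 n2 A) {i : ℕ} (hi : i + 1 ≤ m₂) {W V : ℝ[X]}
    (hWr : RootsIn W (DN S1 S2 (i+1)))
    (hfac : HasFac (linFormNeg S2.μ S2.e (linForm S1.μ S1.e m₁ 0 A) (i+1)) (DN S1 S2 (i+1)) W)
    (hV0 : V ≠ 0) (hVs : SgnOn V (S2.a i) (S2.b i))
    (hVf : HasFac (linFormNeg S2.μ S2.e (linForm S1.μ S1.e m₁ 0 A) i) (DN S1 S2 i) V) :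
    ∃ W' : ℝ[X], W'.natDegree = W.natDegree + n2 i ∧ W' ≠ 0 ∧
      RootsIn W' (cpx (Set.Icc (S2.a i) (S2.b i))) ∧
      HasFac (linFormNeg S2.μ S2.e (linForm S1.μ S1.e m₁ 0 A) i) (DN S1 S2 i) (V * W') := by
  refine up_step (S2.good (show i ≤ m₂ by omega)) (isOpen_DN S1 S2 i) (sub_DN S1 S2 c.base (by omega))
    (L_diff S1 S2 c.base A i (by omega))
    (fun x _ => (linFormNeg_conj _ _ (linForm_conj _ _ _ _ _) i).real x) (S2.e_ne i)
    (P := 0) (d := 0) (k := n2 i) (by simp) (Or.inl rfl) (L_mom c (by omega)) ?_ hWr hfac hV0 hVs hVf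
    _ (by omega)
  intro z _
  simp [linFormNeg]

theorem tailSum_head {m : ℕ} (n : ℕ → ℕ) {j : ℕ} (h : j ≤ m) :
    tailSum m n j = n j + tailSum m n (j+1) := sum_Icc_head h n

theorem tailSum_last (m : ℕ) (n : ℕ → ℕ) : tailSum m n m = n m := by simp [tailSum]

theorem tailSum_add (m : ℕ) (n : ℕ → ℕ) (j : ℕ) : j ≤ m →
    tailSum m n j + ∑ k ∈ Finset.range j, n k = msum m n := by
  induction j with
  | zero =>
    intro _
    simp only [tailSum, msum, Finset.range_zero, Finset.sum_empty, add_zero]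
    apply Finset.sum_congr _ (fun _ _ => rfl)
    ext x; simp
  | succ j ih =>
    intro h
    have := ih (by omega)
    rw [tailSum_head n (show j ≤ m by omega)] at this
    rw [Finset.sum_range_succ]
    omega

theorem low_neg (c : Cfg m₁ m₂ S1 S2 n1 n2 A) (g : ℕ) : ∀ i, m₂ - i = g → i ≤ m₂ → ∀ V : ℝ[X],
    V ≠ 0 → SgnOn V (S2.a i) (S2.b i) →
    HasFac (linFormNeg S2.μ S2.e (linForm S1.μ S1.e m₁ 0 A) i) (DN S1 S2 i) V →
    ∃ W' : ℝ[X], W'.natDegree = tailSum m₂ n2 i ∧ W' ≠ 0 ∧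
      RootsIn W' (cpx (Set.Icc (S2.a i) (S2.b i))) ∧
      HasFac (linFormNeg S2.μ S2.e (linForm S1.μ S1.e m₁ 0 A) i) (DN S1 S2 i) (V * W') := by
  induction g with
  | zero =>
    intro i hg hi V hV0 hVs hVf
    have : i = m₂ := by omega
    subst this
    rw [tailSum_last]
    refine weighted (S2.good hi) (isOpen_DN S1 S2 i) (sub_DN S1 S2 c.base hi)
      (fun x _ => (linFormNeg_conj _ _ (linForm_conj _ _ _ _ _) i).real x) (W := 1) ?_ hV0 hVs hVf _ ?_
    · intro z hz; simp at hz
    · intro ν hν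
      simpa using L_mom c hi ν hν
  | succ g ih =>
    intro i hg hi V hV0 hVs hVf
    obtain ⟨W, hWd, hW0, hWr, hWf⟩ := ih (i+1) (by omega) (by omega) 1 one_ne_zero (sgnOn_one _ _)
      (hasFac_one (L_diff S1 S2 c.base A _ (by omega)))
    rw [one_mul] at hWf
    have := neg_step c (by omega) (W := W) (V := V) ?_ hWf hV0 hVs hVf
    · rw [tailSum_head n2 hi, ← hWd, add_comm]
      exact this
    · intro z hz
      obtain ⟨x, hx, rfl⟩ := hWr z hz
      exact sub_DN S1 S2 c.base (by omega) x hx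

theorem up_neg (c : Cfg m₁ m₂ S1 S2 n1 n2 A) (i : ℕ) : i ≤ m₂ → ∀ W : ℝ[X],
    RootsIn W (DN S1 S2 i) →
    HasFac (linFormNeg S2.μ S2.e (linForm S1.μ S1.e m₁ 0 A) i) (DN S1 S2 i) W →
    ∃ W' : ℝ[X], W'.natDegree = W.natDegree + ∑ k ∈ Finset.range i, n2 k ∧
      RootsIn W' (Dom S1 0) ∧ HasFac (linForm S1.μ S1.e m₁ 0 A) (Dom S1 0) W' := by
  induction i with
  | zero => intro _ W hr hf; exact ⟨W, by simp, hr, hf⟩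
  | succ i ih =>
    intro hi W hr hf
    obtain ⟨W1, hd, h0, hr1, hf1⟩ := neg_step c hi hr hf one_ne_zero (sgnOn_one _ _)
      (hasFac_one (L_diff S1 S2 c.base A i (by omega)))
    rw [one_mul] at hf1
    obtain ⟨W', hd', hr', hf'⟩ := ih (by omega) W1 (by
      intro z hz
      obtain ⟨x, hx, rfl⟩ := hr1 z hz
      exact sub_DN S1 S2 c.base (by omega) x hx) hf1
    refine ⟨W', ?_, hr', hf'⟩
    rw [hd', hd, Finset.sum_range_succ]; ring

theorem pos_step (hn : Decr m₁ n1) (hdeg : ∀ j ≤ m₁, (A j).degree < (n1 j : WithBot ℕ))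
    {j : ℕ} (hj : j < m₁) {W V : ℝ[X]}
    (hWr : RootsIn W (Dom S1 j)) (hfac : HasFac (linForm S1.μ S1.e m₁ j A) (Dom S1 j) W)
    (hV0 : V ≠ 0) (hVs : SgnOn V (S1.a (j+1)) (S1.b (j+1)))
    (hVf : HasFac (linForm S1.μ S1.e m₁ (j+1) A) (Dom S1 (j+1)) V) :
    ∃ W' : ℝ[X], W.natDegree ≤ W'.natDegree + n1 j ∧ W' ≠ 0 ∧
      RootsIn W' (cpx (Set.Icc (S1.a (j+1)) (S1.b (j+1)))) ∧
      HasFac (linForm S1.μ S1.e m₁ (j+1) A) (Dom S1 (j+1)) (V * W') := by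
  have hDj : Dom S1 j = (cpx (Set.Icc (S1.a (j+1)) (S1.b (j+1))))ᶜ := by simp [Dom, hj]
  rw [hDj] at hWr hfac
  by_cases hle : W.natDegree ≤ n1 j
  · refine ⟨1, by omega, one_ne_zero, ?_, by simpa using hVf⟩
    intro z hz; simp at hz
  obtain ⟨P, hP, hrep⟩ := linForm_rep S1 A hn hdeg hj
  obtain ⟨W', hd, h0, hr, hf⟩ := up_step (S1.good (show j + 1 ≤ m₁ by omega)) (isOpen_Dom S1 (j+1))
    (sub_Dom S1 (j+1)) (linForm_diff S1 A (j+1))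
    (fun x _ => (linForm_conj _ _ _ _ _).real x) (S1.e_ne (j+1)) hP (Or.inr rfl)
    (k := 0) (by simp) hrep hWr hfac hV0 hVs hVf (W.natDegree - n1 j) (by omega)
  exact ⟨W', by omega, h0, hr, hf⟩

theorem roots_Dom {W : ℝ[X]} {j : ℕ} (h : RootsIn W (cpx (Set.Icc (S1.a j) (S1.b j)))) :
    RootsIn W (Dom S1 j) := by
  intro z hz
  obtain ⟨x, hx, rfl⟩ := h z hz
  exact sub_Dom S1 j x hx

theorem low_pos (c : Cfg m₁ m₂ S1 S2 n1 n2 A) (j : ℕ) : j ≤ m₁ → ∀ V : ℝ[X],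
    V ≠ 0 → SgnOn V (S1.a j) (S1.b j) → HasFac (linForm S1.μ S1.e m₁ j A) (Dom S1 j) V →
    ∃ W' : ℝ[X], msum m₂ n2 ≤ W'.natDegree + ∑ k ∈ Finset.range j, n1 k ∧ W' ≠ 0 ∧
      RootsIn W' (Dom S1 j) ∧ HasFac (linForm S1.μ S1.e m₁ j A) (Dom S1 j) (V * W') := by
  induction j with
  | zero =>
    intro _ V hV0 hVs hVf
    obtain ⟨e1, e2⟩ := base_ab S1 S2 c.base
    rw [e1, e2] at hVs
    obtain ⟨W', hd, h0, hr, hf⟩ := low_neg c _ 0 rfl (Nat.zero_le _) V hV0 hVs hVf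
    refine ⟨W', ?_, h0, ?_, hf⟩
    · have := tailSum_add m₂ n2 0 (Nat.zero_le _)
      simp at this ⊢
      omega
    · rw [← e1, ← e2] at hr
      exact roots_Dom hr
  | succ j ih =>
    intro hj V hV0 hVs hVf
    obtain ⟨W, hd, h0, hr, hf⟩ := ih (by omega) 1 one_ne_zero (sgnOn_one _ _)
      (hasFac_one (linForm_diff S1 A j))
    rw [one_mul] at hf
    obtain ⟨W', hd', h0', hr', hf'⟩ := pos_step c.h1 c.deg (by omega) hr hf hV0 hVs hVf
    refine ⟨W', ?_, h0', roots_Dom hr', hf'⟩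
    rw [Finset.sum_range_succ]; omega

theorem linForm_tail_zero {μ : ℕ → Measure ℝ} {e : ℕ → ℝ} {j : ℕ} (hj : j ≤ m₁)
    (h : ∀ k, j + 1 ≤ k → k ≤ m₁ → A k = 0) (z : ℂ) :
    linForm μ e m₁ j A z = aeval z (A j) := by
  rw [linForm_head hj, Finset.sum_eq_zero, add_zero]
  intro k hk
  rw [Finset.mem_Icc] at hk
  simp [h k hk.1 hk.2]

theorem tail_poly_zero {j : ℕ} (hj : j ≤ m₁) (h : ∀ k, j + 1 ≤ k → k ≤ m₁ → A k = 0)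
    {W : ℝ[X]} (hr : RootsIn W (Dom S1 j)) (hf : HasFac (linForm S1.μ S1.e m₁ j A) (Dom S1 j) W)
    (hdeg : (A j).degree < (W.natDegree : WithBot ℕ)) : A j = 0 := by
  obtain ⟨H, hH, hHe⟩ := hf
  have := poly_fac (isOpen_Dom S1 j) hH.continuousOn W.natDegree ((A j).map (algebraMap ℝ ℂ))
    (W.map (algebraMap ℝ ℂ)) (natDegree_map _) (by
      intro z hz
      rw [eval_map_c] at hz; exact hr z hz) (by rwa [degree_map]) (by
      intro z hz
      rw [eval_map_c, eval_map_c, ← hHe z hz, linForm_tail_zero hj h])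
  exact (Polynomial.map_eq_zero _).mp this

theorem down (hn : Decr m₁ n1) (hdeg : ∀ j ≤ m₁, (A j).degree < (n1 j : WithBot ℕ)) (g : ℕ) :
    ∀ j, m₁ - j = g → j ≤ m₁ → ∀ W : ℝ[X], RootsIn W (Dom S1 j) →
    HasFac (linForm S1.μ S1.e m₁ j A) (Dom S1 j) W → tailSum m₁ n1 j ≤ W.natDegree →
    ∀ k, j ≤ k → k ≤ m₁ → A k = 0 := by
  induction g with
  | zero =>
    intro j hg hj W hr hf hd k hjk hk
    have : j = m₁ := by omega
    subst this
    have : k = j := by omega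
    subst this
    rw [tailSum_last] at hd
    exact tail_poly_zero hj (by intro k' h1 h2; omega) hr hf
      ((hdeg k hk).trans_le (by exact_mod_cast hd))
  | succ g ih =>
    intro j hg hj W hr hf hd
    rw [tailSum_head n1 hj] at hd
    obtain ⟨W', hd', h0', hr', hf'⟩ := pos_step hn hdeg (show j < m₁ by omega) hr hf one_ne_zero
      (sgnOn_one _ _) (hasFac_one (linForm_diff S1 A (j+1)))
    rw [one_mul] at hf'
    have htail := ih (j+1) (by omega) (by omega) W' (roots_Dom hr') hf' (by omega)
    have hAj : A j = 0 := tail_poly_zero hj htail hr hf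
      ((hdeg j hj).trans_le (by exact_mod_cast (by omega : n1 j ≤ W.natDegree)))
    intro k hjk hk
    by_cases h : k = j
    · rw [h]; exact hAj
    · exact htail k (by omega) hk

theorem nontriv (c : Cfg m₁ m₂ S1 S2 n1 n2 A) {r : ℕ} (hr : msum m₁ n1 ≤ msum m₂ n2 + r)
    (hr2 : r ≤ n1 m₁) (j : ℕ) : j ≤ m₁ → (∀ k, j ≤ k → k ≤ m₁ → A k = 0) →
    ∀ k ≤ m₁, A k = 0 := by
  induction j with
  | zero => intro _ h k hk; exact h k (Nat.zero_le _) hk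
  | succ j ih =>
    intro hj h
    obtain ⟨W, hd, h0, hr1, hf⟩ := low_pos c j (by omega) 1 one_ne_zero (sgnOn_one _ _)
      (hasFac_one (linForm_diff S1 A j))
    rw [one_mul] at hf
    have e1 := tailSum_add m₁ n1 j (by omega)
    have e2 := tailSum_head n1 (show j ≤ m₁ by omega)
    have e3 : n1 m₁ ≤ tailSum m₁ n1 (j+1) :=
      Finset.single_le_sum (f := n1) (fun _ _ => Nat.zero_le _) (Finset.mem_Icc.mpr ⟨hj, le_rfl⟩)
    have hAj : A j = 0 := tail_poly_zero (by omega) h hr1 hf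
      ((c.deg j (by omega)).trans_le (by exact_mod_cast (by omega : n1 j ≤ W.natDegree)))
    apply ih (by omega)
    intro k hjk hk
    by_cases h' : k = j
    · rw [h']; exact hAj
    · exact h k (by omega) hk

theorem rootsIn_mul {V W : ℝ[X]} {D : Set ℂ} (hV : RootsIn V D) (hW : RootsIn W D) :
    RootsIn (V * W) D := by
  intro z hz
  rw [map_mul, mul_eq_zero] at hz
  exact hz.elim (hV z) (hW z)

theorem master_pos (c : Cfg m₁ m₂ S1 S2 n1 n2 A) {r : ℕ} (hr : msum m₁ n1 ≤ msum m₂ n2 + r)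
    (hr2 : r ≤ n1 m₁) {j : ℕ} (hj : j ≤ m₁) {V : ℝ[X]} (hV0 : V ≠ 0) (hVr : r ≤ V.natDegree)
    (hVs : SgnOn V (S1.a j) (S1.b j)) (hVD : RootsIn V (Dom S1 j))
    (hVf : HasFac (linForm S1.μ S1.e m₁ j A) (Dom S1 j) V) : ∀ k ≤ m₁, A k = 0 := by
  obtain ⟨W, hd, h0, hr1, hf⟩ := low_pos c j hj V hV0 hVs hVf
  apply nontriv c hr hr2 j hj
  apply down c.h1 c.deg _ j rfl hj (V * W) (rootsIn_mul hVD hr1) hf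
  have e1 := tailSum_add m₁ n1 j hj
  rw [natDegree_mul hV0 h0]
  omega

theorem master_neg (c : Cfg m₁ m₂ S1 S2 n1 n2 A) {r : ℕ} (hr : msum m₁ n1 ≤ msum m₂ n2 + r)
    {i : ℕ} (hi : i ≤ m₂) {V : ℝ[X]} (hV0 : V ≠ 0) (hVr : r ≤ V.natDegree)
    (hVs : SgnOn V (S2.a i) (S2.b i)) (hVD : RootsIn V (DN S1 S2 i))
    (hVf : HasFac (linFormNeg S2.μ S2.e (linForm S1.μ S1.e m₁ 0 A) i) (DN S1 S2 i) V) :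
    ∀ k ≤ m₁, A k = 0 := by
  obtain ⟨W, hd, h0, hr1, hf⟩ := low_neg c _ i rfl hi V hV0 hVs hVf
  obtain ⟨W', hd', hr', hf'⟩ := up_neg c i hi (V * W) (rootsIn_mul hVD (by
      intro z hz
      obtain ⟨x, hx, rfl⟩ := hr1 z hz
      exact sub_DN S1 S2 c.base (by omega) x hx)) hf
  intro k hk
  refine down c.h1 c.deg _ 0 rfl (Nat.zero_le _) W' hr' hf' ?_ k (Nat.zero_le _) hk
  have e1 := tailSum_add m₁ n1 0 (Nat.zero_le _)
  have e2 := tailSum_add m₂ n2 i hi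
  rw [natDegree_mul hV0 h0] at hd'
  simp at e1
  omega

end

/-! ### Zeros: reality, simplicity, interlacing (generic part) -/

theorem double_fac {F : ℂ → ℂ} {D : Set ℂ} (hD : IsOpen D) (hF : DifferentiableOn ℂ F D) {x : ℝ}
    (hx : (x : ℂ) ∈ D) (h0 : F x = 0) (h1 : deriv F x = 0) : HasFac F D ((X - C x) ^ 2) := by
  obtain ⟨d1, e1⟩ := fac_add hD hF hx h0
  obtain ⟨d2, e2⟩ := fac_add hD d1 hx (by rw [dslope_same, h1])
  refine ⟨_, d2, fun z hz => ?_⟩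
  rw [e1 z hz, e2 z hz]
  simp
  ring

theorem rootsIn_lin {D : Set ℂ} {x : ℝ} (hx : (x : ℂ) ∈ D) : RootsIn (X - C x) D := by
  intro z hz
  have : z = x := by
    have : z - (x : ℂ) = 0 := by simpa using hz
    exact sub_eq_zero.mp this
  rwa [this]

theorem rootsIn_sq {D : Set ℂ} {x : ℝ} (hx : (x : ℂ) ∈ D) : RootsIn ((X - C x) ^ 2) D := by
  rw [pow_two]; exact rootsIn_mul (rootsIn_lin hx) (rootsIn_lin hx)

theorem classify {F : ℂ → ℂ} {D : Set ℂ} {a b : ℝ} (hD : IsOpen D)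
    (hDc : ∀ z ∈ D, starRingEnd ℂ z ∈ D) (hF : DifferentiableOn ℂ F D) (hc : ConjS F)
    (hno : ∀ V : ℝ[X], V ≠ 0 → 1 ≤ V.natDegree → SgnOn V a b → RootsIn V D → HasFac F D V → False)
    {z : ℂ} (hz : z ∈ D) (h0 : F z = 0) :
    z.im = 0 ∧ z.re ∈ Set.Ioo a b ∧ deriv F z ≠ 0 := by
  have him : z.im = 0 := by
    by_contra him
    have hzc := hDc z hz
    have hne : starRingEnd ℂ z ≠ z := fun h => him (Complex.conj_eq_iff_im.mp h)
    obtain ⟨d1, e1⟩ := fac_add hD hF hz h0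
    have hz2 : dslope F z (starRingEnd ℂ z) = 0 := by
      have := e1 _ hzc
      rw [hc z, h0, map_zero] at this
      rcases mul_eq_zero.mp this.symm with h | h
      · exact absurd (sub_eq_zero.mp h) hne
      · exact h
    obtain ⟨d2, e2⟩ := fac_add hD d1 hzc hz2
    have key : ∀ w : ℂ, aeval w ((X - C z.re) ^ 2 + C (z.im ^ 2) : ℝ[X]) =
        (w - z) * (w - starRingEnd ℂ z) := by
      intro w
      have e3 : z * starRingEnd ℂ z = (z.re : ℂ) ^ 2 + (z.im : ℂ) ^ 2 := by
        rw [Complex.mul_conj, Complex.normSq_apply]; push_cast; ring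
      have e4 : z + starRingEnd ℂ z = 2 * (z.re : ℂ) := by
        rw [Complex.add_conj]; push_cast; ring
      simp
      linear_combination (-1 : ℂ) * e3 + w * e4
    have hdeg : ((X - C z.re) ^ 2 + C (z.im ^ 2) : ℝ[X]).natDegree = 2 := by
      rw [natDegree_add_C, natDegree_pow, natDegree_X_sub_C]
    refine hno ((X - C z.re) ^ 2 + C (z.im ^ 2)) ?_ ?_ ?_ ?_ ⟨_, d2, ?_⟩
    · intro h; rw [h] at hdeg; simp at hdeg
    · rw [hdeg]; norm_num
    · left; intro x _; simp; positivity
    · intro w hw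
      rw [key] at hw
      rcases mul_eq_zero.mp hw with h | h
      · rwa [sub_eq_zero.mp h]
      · rwa [sub_eq_zero.mp h]
    · intro w hw
      rw [key, e1 w hw, e2 w hw]; ring
  obtain ⟨x, rfl⟩ : ∃ x : ℝ, z = x := ⟨z.re, by apply Complex.ext <;> simp [him]⟩
  refine ⟨him, ?_, ?_⟩
  · rw [Complex.ofReal_re]
    by_contra hx
    obtain ⟨d1, e1⟩ := fac_add hD hF hz h0
    refine hno (X - C x) (X_sub_C_ne_zero x) (by simp) ?_ (rootsIn_lin hz) ⟨_, d1, ?_⟩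
    · by_cases hxa : x ≤ a
      · left; intro y hy; simp; linarith [hy.1]
      · right; intro y hy
        have : b ≤ x := by
          by_contra h
          exact hx ⟨not_le.mp hxa, not_le.mp h⟩
        simp; linarith [hy.2]
    · intro w hw; rw [e1 w hw]; simp
  · intro h1
    refine hno ((X - C x) ^ 2) (pow_ne_zero _ (X_sub_C_ne_zero x)) (by simp) ?_ (rootsIn_sq hz)
      (double_fac hD hF hz h0 h1)
    left; intro y _; simp; positivity

theorem real_deriv {F : ℂ → ℂ} {D : Set ℂ} (hD : IsOpen D) (hF : DifferentiableOn ℂ F D)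
    (hc : ConjS F) {x : ℝ} (hx : (x : ℂ) ∈ D) :
    HasDerivAt (fun y : ℝ => (F y).re) (deriv F x).re x ∧ (deriv F x).im = 0 := by
  have h := (hF.differentiableAt (hD.mem_nhds hx)).hasDerivAt
  refine ⟨h.real_of_complex, ?_⟩
  have h2 : HasDerivAt (fun y : ℝ => (F y).im) (deriv F x).im x := by
    have := Complex.imCLM.hasFDerivAt.comp_hasDerivAt x h.comp_ofReal
    simpa [Function.comp_def] using this
  have h3 : (fun y : ℝ => (F y).im) = fun _ => 0 := by ext y; exact hc.real y
  rw [h3] at h2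
  exact h2.unique (hasDerivAt_const x 0)

theorem interlace {F G : ℂ → ℂ} {D : Set ℂ} {a b : ℝ} (hD : IsOpen D)
    (hF : DifferentiableOn ℂ F D) (hG : DifferentiableOn ℂ G D) (hcF : ConjS F) (hcG : ConjS G)
    (hsub : ∀ x ∈ Set.Icc a b, (x : ℂ) ∈ D)
    (hcl : ∀ z ∈ D, F z = 0 → z.im = 0 ∧ z.re ∈ Set.Ioo a b ∧ deriv F z ≠ 0)
    (hcomb : ∀ α β : ℝ, (α ≠ 0 ∨ β ≠ 0) → ∀ x ∈ Set.Icc a b,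
      HasFac (fun z => α * F z + β * G z) D ((X - C x) ^ 2) → False) : InterlaceOn F G D := by
  intro x1 x2 h12 hx1 hx2 hF1 hF2 _
  have i1 := (hcl _ hx1 hF1).2.1
  have i2 := (hcl _ hx2 hF2).2.1
  rw [Complex.ofReal_re] at i1 i2
  have hw : ∀ y ∈ Set.Icc x1 x2, ∀ α β : ℝ, (α ≠ 0 ∨ β ≠ 0) →
      α * (F y).re + β * (G y).re = 0 → α * (deriv F y).re + β * (deriv G y).re = 0 → False := by
    intro y hy α β hab e0 e1
    have hyI : y ∈ Set.Icc a b := ⟨i1.1.le.trans hy.1, hy.2.trans i2.2.le⟩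
    have hyD := hsub y hyI
    apply hcomb α β hab y hyI
    have dF := hF.differentiableAt (hD.mem_nhds hyD)
    have dG := hG.differentiableAt (hD.mem_nhds hyD)
    apply double_fac hD ((hF.const_mul _).fun_add (hG.const_mul _)) hyD
    · apply Complex.ext
      · simpa using e0
      · simp [hcF.real y, hcG.real y]
    · have : deriv (fun z => (α : ℂ) * F z + β * G z) y = α * deriv F y + β * deriv G y :=
        ((dF.hasDerivAt.const_mul _).add (dG.hasDerivAt.const_mul _)).deriv
      rw [this]
      apply Complex.ext
      · simpa using e1
      · simp [(real_deriv hD hF hcF hyD).2, (real_deriv hD hG hcG hyD).2]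
  have hDI : ∀ y ∈ Set.Icc x1 x2, (y : ℂ) ∈ D := fun y hy =>
    hsub y ⟨i1.1.le.trans hy.1, hy.2.trans i2.2.le⟩
  have hend : ∀ y ∈ Set.Icc x1 x2, F y = 0 → (G y).re ≠ 0 := by
    intro y hy e0 e1
    by_cases h : (deriv G y).re = 0 ∧ (deriv F y).re = 0
    · exact hw y hy 1 0 (by simp) (by simp [e0]) (by simp [h.2])
    · refine hw y hy (deriv G y).re (-(deriv F y).re) ?_ (by simp [e0, e1]) (by ring)
      by_contra hh
      push Not at hh
      exact h ⟨hh.1, by linarith [hh.2]⟩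
  by_contra hcon
  have hG0 : ∀ y ∈ Set.Icc x1 x2, (G y).re ≠ 0 := by
    intro y hy
    rcases eq_or_lt_of_le hy.1 with h | h
    · subst h; exact hend _ hy hF1
    rcases eq_or_lt_of_le hy.2 with h' | h'
    · subst h'; exact hend _ hy hF2
    · intro e
      exact hcon ⟨y, h, h', Complex.ext (by simpa using e) (by simpa using hcG.real y)⟩
  have hdiv : ∀ y ∈ Set.Icc x1 x2, HasDerivAt (fun y : ℝ => (F y).re / (G y).re)
      (((deriv F y).re * (G y).re - (F y).re * (deriv G y).re) / (G y).re ^ 2) y := fun y hy =>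
    (real_deriv hD hF hcF (hDI y hy)).1.fun_div (real_deriv hD hG hcG (hDI y hy)).1 (hG0 y hy)
  obtain ⟨c, hc, hc0⟩ := exists_hasDerivAt_eq_zero h12
    (fun y hy => (hdiv y hy).continuousAt.continuousWithinAt)
    (by simp [hF1, hF2]) (fun y hy => hdiv y (Set.Ioo_subset_Icc_self hy))
  have hcI := Set.Ioo_subset_Icc_self hc
  have hg := hG0 c hcI
  rw [div_eq_zero_iff] at hc0
  rcases hc0 with h | h
  · exact hw c hcI (G c).re (-(F c).re) (Or.inl hg) (by ring) (by linarith)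
  · exact hg (pow_eq_zero_iff (by norm_num) |>.mp h)

theorem endgame {F G : ℂ → ℂ} {D : Set ℂ} {a b : ℝ} (hD : IsOpen D)
    (hDc : ∀ z ∈ D, starRingEnd ℂ z ∈ D)
    (hF : DifferentiableOn ℂ F D) (hG : DifferentiableOn ℂ G D) (hcF : ConjS F) (hcG : ConjS G)
    (hsub : ∀ x ∈ Set.Icc a b, (x : ℂ) ∈ D)
    (hnoF : ∀ V : ℝ[X], V ≠ 0 → 1 ≤ V.natDegree → SgnOn V a b → RootsIn V D → HasFac F D V → False)
    (hnoG : ∀ V : ℝ[X], V ≠ 0 → 1 ≤ V.natDegree → SgnOn V a b → RootsIn V D → HasFac G D V → False)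
    (hcomb : ∀ α β : ℝ, (α ≠ 0 ∨ β ≠ 0) → ∀ x ∈ Set.Icc a b,
      HasFac (fun z => α * F z + β * G z) D ((X - C x) ^ 2) → False) :
    (∀ z ∈ D, (F z = 0 → z.im = 0 ∧ z.re ∈ Set.Ioo a b ∧ deriv F z ≠ 0) ∧
      (G z = 0 → z.im = 0 ∧ z.re ∈ Set.Ioo a b ∧ deriv G z ≠ 0)) ∧
    InterlaceOn F G D ∧ InterlaceOn G F D := by
  have cF := fun z hz h0 => classify (z := z) hD hDc hF hcF hnoF hz h0
  have cG := fun z hz h0 => classify (z := z) hD hDc hG hcG hnoG hz h0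
  refine ⟨fun z hz => ⟨cF z hz, cG z hz⟩, interlace hD hF hG hcF hcG hsub cF hcomb,
    interlace hD hG hF hcG hcF hsub cG ?_⟩
  intro α β hab x hx hf
  refine hcomb β α hab.symm x hx ?_
  simpa only [add_comm] using hf

theorem conj_cpx {s : Set ℝ} : ∀ z ∈ (cpx s)ᶜ, starRingEnd ℂ z ∈ (cpx s)ᶜ := by
  rintro z hz ⟨x, hx, h⟩
  apply hz
  refine ⟨x, hx, ?_⟩
  have := congrArg (starRingEnd ℂ) h
  simpa using this

theorem conj_Dom {m : ℕ} (S : NikSys m) (j : ℕ) : ∀ z ∈ Dom S j, starRingEnd ℂ z ∈ Dom S j := by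
  unfold Dom
  split_ifs
  · exact conj_cpx
  · intro z _; trivial

/-! ### Linear combinations -/

theorem linForm_comb (μ : ℕ → Measure ℝ) (e : ℕ → ℝ) (m j : ℕ) (A A' : ℕ → ℝ[X]) (α β : ℝ) (z : ℂ) :
    linForm μ e m j (fun k => C α * A k + C β * A' k) z =
      α * linForm μ e m j A z + β * linForm μ e m j A' z := by
  unfold linForm
  rw [Finset.mul_sum, Finset.mul_sum, ← Finset.sum_add_distrib]
  apply Finset.sum_congr rfl
  intro k _
  simp
  ring

theorem integral_comb {μ : Measure ℝ} {a b : ℝ} (h : Good μ a b) {f g : ℝ → ℂ}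
    (hf : ContinuousOn f (Set.Icc a b)) (hg : ContinuousOn g (Set.Icc a b)) (α β : ℂ) :
    ∫ x, (α * f x + β * g x) ∂μ = α * ∫ x, f x ∂μ + β * ∫ x, g x ∂μ := by
  rw [integral_add ((h.int hf).const_mul _) ((h.int hg).const_mul _), integral_const_mul,
    integral_const_mul]

theorem L_comb {m₁ m₂ : ℕ} (S1 : NikSys m₁) (S2 : NikSys m₂) (hb : S1.μ 0 = S2.μ 0)
    (A A' : ℕ → ℝ[X]) (α β : ℝ) (i : ℕ) : i ≤ m₂ → ∀ z ∈ DN S1 S2 i,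
    linFormNeg S2.μ S2.e (linForm S1.μ S1.e m₁ 0 (fun k => C α * A k + C β * A' k)) i z =
      α * linFormNeg S2.μ S2.e (linForm S1.μ S1.e m₁ 0 A) i z +
      β * linFormNeg S2.μ S2.e (linForm S1.μ S1.e m₁ 0 A') i z := by
  induction i with
  | zero => intro _ z _; exact linForm_comb _ _ _ _ _ _ _ _ _
  | succ i ih =>
    intro hi z hz
    have hi' : i ≤ m₂ := by omega
    have g := S2.good hi'
    simp only [linFormNeg]
    have := integral_comb g (contOn_div (L_contOn S1 S2 hb A hi') hz)
      (contOn_div (L_contOn S1 S2 hb A' hi') hz) α β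
    rw [g.integral_congr (g := fun x : ℝ =>
      (α : ℂ) * (linFormNeg S2.μ S2.e (linForm S1.μ S1.e m₁ 0 A) i x / (z - x)) +
      β * (linFormNeg S2.μ S2.e (linForm S1.μ S1.e m₁ 0 A') i x / (z - x))), this]
    · ring
    · intro x hx
      rw [ih hi' x (sub_DN S1 S2 hb hi' x hx)]; ring

theorem orth_comb {m₁ m₂ : ℕ} (S1 : NikSys m₁) (S2 : NikSys m₂) (hb : S1.μ 0 = S2.μ 0)
    (A A' : ℕ → ℝ[X]) (α β : ℝ) {k ν : ℕ} (hk : k ≤ m₂)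
    (h : sInt S2.μ S2.e 0 k (fun x => (x : ℂ) ^ ν * linForm S1.μ S1.e m₁ 0 A (x : ℂ)) = 0)
    (h' : sInt S2.μ S2.e 0 k (fun x => (x : ℂ) ^ ν * linForm S1.μ S1.e m₁ 0 A' (x : ℂ)) = 0) :
    sInt S2.μ S2.e 0 k (fun x => (x : ℂ) ^ ν *
      linForm S1.μ S1.e m₁ 0 (fun k => C α * A k + C β * A' k) (x : ℂ)) = 0 := by
  unfold sInt at *
  have g := S2.good (Nat.zero_le m₂)
  have hc : ∀ B : ℕ → ℝ[X], ContinuousOn (fun x : ℝ => (x : ℂ) ^ ν *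
      linForm S1.μ S1.e m₁ 0 B (x : ℂ) * wt S2.μ S2.e 0 k (x : ℂ)) (Set.Icc (S2.a 0) (S2.b 0)) := by
    intro B
    have h1 := L_contOn S1 S2 hb B (Nat.zero_le m₂)
    simp only [linFormNeg] at h1
    exact (ContinuousOn.mul (by fun_prop) h1).mul (wt_contOn S2 hk 0)
  have := integral_comb g (hc A) (hc A') α β
  rw [g.integral_congr (g := fun x : ℝ => (α : ℂ) * ((x : ℂ) ^ ν *
      linForm S1.μ S1.e m₁ 0 A (x : ℂ) * wt S2.μ S2.e 0 k (x : ℂ)) + β * ((x : ℂ) ^ ν *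
      linForm S1.μ S1.e m₁ 0 A' (x : ℂ) * wt S2.μ S2.e 0 k (x : ℂ))), this]
  · linear_combination (α : ℂ) * h + β * h'
  · intro x _
    beta_reduce
    rw [linForm_comb]; ring

theorem msum_bump {m l : ℕ} (hl : l ≤ m) (n : ℕ → ℕ) : msum m (bump l n) = msum m n + 1 := by
  unfold msum bump
  have : ∀ j, (if j = l then n j + 1 else n j) = n j + if j = l then 1 else 0 := by
    intro j; split_ifs <;> rfl
  simp only [this, Finset.sum_add_distrib]
  rw [Finset.sum_ite_eq' ]
  simp [Nat.lt_succ_of_le hl]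

theorem le_bump (l : ℕ) (n : ℕ → ℕ) (j : ℕ) : n j ≤ bump l n j := by
  unfold bump; split_ifs <;> omega

theorem IsMOP.cfg {m₁ m₂ : ℕ} {S1 : NikSys m₁} {S2 : NikSys m₂} {n1 n2 : ℕ → ℕ} {A : ℕ → ℝ[X]}
    (h : IsMOP m₁ m₂ S1 S2 n1 n2 A) (hb : S1.μ 0 = S2.μ 0) (h1 : Decr m₁ n1) (h2 : Decr m₂ n2) :
    Cfg m₁ m₂ S1 S2 n1 n2 A := ⟨hb, h1, h2, h.1, h.2.2⟩

theorem IsMOP.absurd' {m₁ m₂ : ℕ} {S1 : NikSys m₁} {S2 : NikSys m₂} {n1 n2 : ℕ → ℕ} {A : ℕ → ℝ[X]}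
    (h : IsMOP m₁ m₂ S1 S2 n1 n2 A) (h0 : ∀ k ≤ m₁, A k = 0) : False := by
  obtain ⟨j, hj, hne⟩ := h.2.1
  exact hne (h0 j hj)

theorem comb_cfg {m₁ m₂ : ℕ} {S1 : NikSys m₁} {S2 : NikSys m₂} {n1 n2 : ℕ → ℕ} {A A' : ℕ → ℝ[X]}
    {l₁ l₂ : ℕ} (hb : S1.μ 0 = S2.μ 0) (h1l : Decr m₁ (bump l₁ n1)) (h2 : Decr m₂ n2)
    (hA : IsMOP m₁ m₂ S1 S2 n1 n2 A)
    (hA' : IsMOP m₁ m₂ S1 S2 (bump l₁ n1) (bump l₂ n2) A') (α β : ℝ) :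
    Cfg m₁ m₂ S1 S2 (bump l₁ n1) n2 (fun k => C α * A k + C β * A' k) := by
  refine ⟨hb, h1l, h2, ?_, ?_⟩
  · intro j hj
    have d1 : (A j).degree < (bump l₁ n1 j : WithBot ℕ) :=
      (hA.1 j hj).trans_le (by exact_mod_cast le_bump l₁ n1 j)
    have d2 := hA'.1 j hj
    refine (degree_add_le _ _).trans_lt (max_lt ?_ ?_)
    · rw [← smul_eq_C_mul]; exact (degree_smul_le _ _).trans_lt d1
    · rw [← smul_eq_C_mul]; exact (degree_smul_le _ _).trans_lt d2
  · intro k hk ν hν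
    exact orth_comb S1 S2 hb A A' α β hk (hA.2.2 k hk ν hν)
      (hA'.2.2 k hk ν (hν.trans_le (le_bump _ _ _)))

theorem comb_ne {m₁ m₂ : ℕ} {S1 : NikSys m₁} {S2 : NikSys m₂} {n1 n2 : ℕ → ℕ} {A A' : ℕ → ℝ[X]}
    {l₁ l₂ : ℕ} (hb : S1.μ 0 = S2.μ 0) (hl₂ : l₂ ≤ m₂) (h1 : Decr m₁ n1)
    (h2l : Decr m₂ (bump l₂ n2)) (hsum : msum m₂ n2 + 1 = msum m₁ n1)
    (hA : IsMOP m₁ m₂ S1 S2 n1 n2 A)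
    (hA' : IsMOP m₁ m₂ S1 S2 (bump l₁ n1) (bump l₂ n2) A') {α β : ℝ} (hab : α ≠ 0 ∨ β ≠ 0)
    (h0 : ∀ k ≤ m₁, C α * A k + C β * A' k = 0) : False := by
  by_cases hβ : β = 0
  · have hα : α ≠ 0 := hab.resolve_right (by simpa using hβ)
    apply hA.absurd'
    intro k hk
    have := h0 k hk
    rw [hβ, C_0, zero_mul, add_zero] at this
    exact (mul_eq_zero.mp this).resolve_left (by simpa using hα)
  · apply hA'.absurd'
    have c : Cfg m₁ m₂ S1 S2 n1 (bump l₂ n2) A' := by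
      refine ⟨hb, h1, h2l, ?_, hA'.2.2⟩
      intro k hk
      have e : A' k = (-(α / β)) • A k := by
        have h := h0 k hk
        have hC : C (β⁻¹) * C β = (1 : ℝ[X]) := by rw [← C_mul, inv_mul_cancel₀ hβ, C_1]
        rw [smul_eq_C_mul, C_neg, div_eq_mul_inv, C_mul]
        linear_combination C (β⁻¹) * h - A' k * hC
      rw [e]
      exact (degree_smul_le _ _).trans_lt (hA.1 k hk)
    exact master_pos c (r := 0) (by rw [msum_bump hl₂]; omega) (Nat.zero_le _) (Nat.zero_le _)
      one_ne_zero (Nat.zero_le _) (sgnOn_one _ _) (by intro z hz; simp at hz)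
      (hasFac_one (linForm_diff S1 A' 0))


/-- **Interlacing.** If `n_{1,m₁} ≥ 2` then for every
`j ∈ {-m₂,…,m₁}` the zeros of `𝒜_{n,j}` and `𝒜_{n^l,j}` (in the appropriate region)
are real and simple, lie in the interior of the corresponding interval, and
interlace. -/
theorem interlacing_of_zeros
    (m₁ m₂ : ℕ) (S1 : NikSys m₁) (S2 : NikSys m₂)
    (hbase : S1.μ 0 = S2.μ 0 ∧ S1.e 0 = S2.e 0)
    (n1 n2 : ℕ → ℕ) (l₁ l₂ : ℕ) (hl₁ : l₁ ≤ m₁) (hl₂ : l₂ ≤ m₂)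
    (h1 : Decr m₁ n1) (h2 : Decr m₂ n2)
    (h1l : Decr m₁ (bump l₁ n1)) (h2l : Decr m₂ (bump l₂ n2))
    (hsum : msum m₂ n2 + 1 = msum m₁ n1) (hlast : 2 ≤ n1 m₁)
    (A A' : ℕ → Polynomial ℝ)
    (hA : IsMOP m₁ m₂ S1 S2 n1 n2 A) (hAm : MonicLast m₁ A)
    (hA' : IsMOP m₁ m₂ S1 S2 (bump l₁ n1) (bump l₂ n2) A') (hA'm : MonicLast m₁ A') :
    -- indices `j = 0,…,m₁` (zeros taken in `ℂ ∖ Δ¹_{j+1}`):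
    (∀ j ≤ m₁,
      (∀ z ∈ (if j < m₁ then (cpx (Set.Icc (S1.a (j+1)) (S1.b (j+1))))ᶜ
          else (Set.univ : Set ℂ)),
        (linForm S1.μ S1.e m₁ j A z = 0 →
          z.im = 0 ∧ z.re ∈ Set.Ioo (S1.a j) (S1.b j) ∧
            deriv (linForm S1.μ S1.e m₁ j A) z ≠ 0) ∧
        (linForm S1.μ S1.e m₁ j A' z = 0 →
          z.im = 0 ∧ z.re ∈ Set.Ioo (S1.a j) (S1.b j) ∧
            deriv (linForm S1.μ S1.e m₁ j A') z ≠ 0)) ∧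
      InterlaceOn (linForm S1.μ S1.e m₁ j A) (linForm S1.μ S1.e m₁ j A')
        (if j < m₁ then (cpx (Set.Icc (S1.a (j+1)) (S1.b (j+1))))ᶜ
          else (Set.univ : Set ℂ)) ∧
      InterlaceOn (linForm S1.μ S1.e m₁ j A') (linForm S1.μ S1.e m₁ j A)
        (if j < m₁ then (cpx (Set.Icc (S1.a (j+1)) (S1.b (j+1))))ᶜ
          else (Set.univ : Set ℂ))) ∧
    -- indices `j = -1,…,-m₂` (zeros of `𝒜_{n,-j}` taken in `ℂ ∖ Δ²_{j-1}`):
    (∀ j, 1 ≤ j → j ≤ m₂ →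
      (∀ z ∈ (cpx (Set.Icc (S2.a (j-1)) (S2.b (j-1))))ᶜ,
        (linFormNeg S2.μ S2.e (linForm S1.μ S1.e m₁ 0 A) j z = 0 →
          z.im = 0 ∧ z.re ∈ Set.Ioo (S2.a j) (S2.b j) ∧
            deriv (linFormNeg S2.μ S2.e (linForm S1.μ S1.e m₁ 0 A) j) z ≠ 0) ∧
        (linFormNeg S2.μ S2.e (linForm S1.μ S1.e m₁ 0 A') j z = 0 →
          z.im = 0 ∧ z.re ∈ Set.Ioo (S2.a j) (S2.b j) ∧
            deriv (linFormNeg S2.μ S2.e (linForm S1.μ S1.e m₁ 0 A') j) z ≠ 0)) ∧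
      InterlaceOn (linFormNeg S2.μ S2.e (linForm S1.μ S1.e m₁ 0 A) j)
        (linFormNeg S2.μ S2.e (linForm S1.μ S1.e m₁ 0 A') j)
        ((cpx (Set.Icc (S2.a (j-1)) (S2.b (j-1))))ᶜ) ∧
      InterlaceOn (linFormNeg S2.μ S2.e (linForm S1.μ S1.e m₁ 0 A') j)
        (linFormNeg S2.μ S2.e (linForm S1.μ S1.e m₁ 0 A) j)
        ((cpx (Set.Icc (S2.a (j-1)) (S2.b (j-1))))ᶜ)) := by
  have hb := hbase.1
  have hcA := hA.cfg hb h1 h2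
  have hcA' := hA'.cfg hb h1l h2l
  have b1 := msum_bump hl₁ n1
  have b2 := msum_bump hl₂ n2
  have hm := le_bump l₁ n1 m₁
  have sgn2 : ∀ x a b : ℝ, SgnOn ((X - C x) ^ 2) a b := by
    intro x a b; left; intro y _; simp; positivity
  refine ⟨fun j hj => ?_, fun j hj1 hj => ?_⟩
  · refine endgame (isOpen_Dom S1 j) (conj_Dom S1 j) (linForm_diff S1 A j) (linForm_diff S1 A' j)
      (linForm_conj _ _ _ _ _) (linForm_conj _ _ _ _ _) (sub_Dom S1 j) ?_ ?_ ?_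
    · intro V hV0 hV1 hVs hVD hVf
      exact hA.absurd' (master_pos hcA (r := 1) (by omega) (by omega) hj hV0 hV1 hVs hVD hVf)
    · intro V hV0 hV1 hVs hVD hVf
      exact hA'.absurd' (master_pos hcA' (r := 1) (by omega) (by omega) hj hV0 hV1 hVs hVD hVf)
    · intro α β hab x hx hf
      apply comb_ne hb hl₂ h1 h2l hsum hA hA' hab
      refine master_pos (comb_cfg hb h1l h2 hA hA' α β) (r := 2) (by omega) (by omega) hj
        (pow_ne_zero 2 (X_sub_C_ne_zero x)) (by simp) (sgn2 _ _ _)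
        (rootsIn_sq (sub_Dom S1 j x hx)) ?_
      obtain ⟨H, hH, he⟩ := hf
      exact ⟨H, hH, fun z hz => by rw [linForm_comb]; exact he z hz⟩
  · obtain ⟨i, rfl⟩ : ∃ i, j = i + 1 := ⟨j - 1, by omega⟩
    refine endgame (isOpen_DN S1 S2 (i + 1)) conj_cpx (L_diff S1 S2 hb A _ hj)
      (L_diff S1 S2 hb A' _ hj)
      (linFormNeg_conj _ _ (linForm_conj _ _ _ _ _) _)
      (linFormNeg_conj _ _ (linForm_conj _ _ _ _ _) _) (sub_DN S1 S2 hb hj) ?_ ?_ ?_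
    · intro V hV0 hV1 hVs hVD hVf
      exact hA.absurd' (master_neg hcA (r := 1) (by omega) hj hV0 hV1 hVs hVD hVf)
    · intro V hV0 hV1 hVs hVD hVf
      exact hA'.absurd' (master_neg hcA' (r := 1) (by omega) hj hV0 hV1 hVs hVD hVf)
    · intro α β hab x hx hf
      apply comb_ne hb hl₂ h1 h2l hsum hA hA' hab
      refine master_neg (comb_cfg hb h1l h2 hA hA' α β) (r := 2) (by omega) hj
        (pow_ne_zero 2 (X_sub_C_ne_zero x)) (by simp) (sgn2 _ _ _)
        (rootsIn_sq (sub_DN S1 S2 hb hj x hx)) ?_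
      obtain ⟨H, hH, he⟩ := hf
      exact ⟨H, hH, fun z hz => by rw [L_comb S1 S2 hb _ _ _ _ _ hj z hz]; exact he z hz⟩

end
end

section
/- Let σ_0,…,σ_m generate a Nikishin system N(σ_0,…,σ_m) on intervals Δ_0,…,Δ_m. For all 0 ≤ i < j ≤ m and all z ∈ ℂ∖(Δ_i ∪ Δ_j), the Cauchy transforms satisfy: ⟨σ_j,σ_{j−1},…,σ_i⟩^(z) = Σ_{k=i}^{j−1} (−1)^{k−i} ⟨σ_i,…,σ_k⟩^(z) · ⟨σ_j,σ_{j−1},…,σ_{k+1}⟩^(z) + (−1)^{j−i} ⟨σ_i,…,σ_j⟩^(z), where μ̂(z) = ∫ dμ(t)/(z−t) denotes the Cauchy transform of the measure μ. -/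
open MeasureTheory Polynomial Set Filter

noncomputable section

/-- Cauchy transform of the measure `⟨σ_{i_1}, …, σ_{i_r}⟩` given by the list of
(positive part, sign) pairs; the empty list gives the constant `1` (the density of
the innermost measure). -/
def listHat : List (Measure ℝ × ℝ) → ℂ → ℂ
  | [], _ => 1
  | (p :: rest), z => (p.2 : ℂ) * ∫ t, listHat rest (t : ℂ) / (z - (t : ℂ)) ∂p.1

/-- The chain `σ_i, σ_{i+1}, …, σ_k` (increasing indices). -/
def chain (μ : ℕ → Measure ℝ) (e : ℕ → ℝ) (i k : ℕ) : List (Measure ℝ × ℝ) :=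
  (List.range' i (k + 1 - i)).map fun t => (μ t, e t)

/-- The chain `σ_k, σ_{k-1}, …, σ_i` (decreasing indices). -/
def rchain (μ : ℕ → Measure ℝ) (e : ℕ → ℝ) (i k : ℕ) : List (Measure ℝ × ℝ) :=
  (chain μ e i k).reverse

/-- Weighted Cauchy transform of `f dσ_k`. -/
def cT {m : ℕ} (S : NikSys m) (k : ℕ) (f : ℂ → ℂ) (z : ℂ) : ℂ :=
  (S.e k : ℂ) * ∫ t, f (t : ℂ) / (z - (t : ℂ)) ∂(S.μ k)

/-- Forward composition of `n` weighted Cauchy transforms starting at index `i`. -/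
def cF {m : ℕ} (S : NikSys m) : ℕ → ℕ → (ℂ → ℂ) → ℂ → ℂ
  | _, 0, f => f
  | i, n + 1, f => cT S i (cF S (i + 1) n f)

/-- Backward composition. -/
def cG {m : ℕ} (S : NikSys m) : ℕ → ℕ → (ℂ → ℂ) → ℂ → ℂ
  | _, 0, f => f
  | i, n + 1, f => cG S (i + 1) n (cT S i f)

/-- Continuity on `Δ_k`. -/
def Adm {m : ℕ} (S : NikSys m) (k : ℕ) (f : ℂ → ℂ) : Prop :=
  ContinuousOn (fun x : ℝ => f (x : ℂ)) (Set.Icc (S.a k) (S.b k))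

theorem ae_mem {m : ℕ} (S : NikSys m) {k : ℕ} (hk : k ≤ m) :
    ∀ᵐ x ∂(S.μ k), x ∈ Set.Icc (S.a k) (S.b k) := by
  have h : (S.μ k).support ⊆ Set.Icc (S.a k) (S.b k) := by
    rw [← S.hull k hk]
    refine Set.Subset.trans ?_ (subset_convexHull ℝ _)
    intro x hx U hU hxU
    exact ((Measure.mem_support_iff_forall x).1 hx U (hU.mem_nhds hxU)).ne'
  exact Filter.mem_of_superset Measure.support_mem_ae h

theorem restr {m : ℕ} (S : NikSys m) {k : ℕ} (hk : k ≤ m) :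
    (S.μ k).restrict (Set.Icc (S.a k) (S.b k)) = S.μ k :=
  Measure.restrict_eq_self_of_ae_mem (ae_mem S hk)

theorem integ {m : ℕ} (S : NikSys m) {k : ℕ} (hk : k ≤ m) {f : ℝ → ℂ}
    (hf : ContinuousOn f (Set.Icc (S.a k) (S.b k))) : Integrable f (S.μ k) := by
  have := S.fin k
  have := hf.integrableOn_compact (μ := S.μ k) isCompact_Icc
  rwa [IntegrableOn, restr S hk] at this

theorem sub_ne {m : ℕ} (S : NikSys m) {k : ℕ} {z : ℂ}
    (hz : z ∉ cpx (Set.Icc (S.a k) (S.b k))) {t : ℝ} (ht : t ∈ Set.Icc (S.a k) (S.b k)) :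
    z - (t : ℂ) ≠ 0 := by
  intro h
  exact hz ⟨t, ht, (sub_eq_zero.1 h).symm⟩

theorem cont_div {m : ℕ} (S : NikSys m) {k : ℕ} {z : ℂ}
    (hz : z ∉ cpx (Set.Icc (S.a k) (S.b k))) {f : ℂ → ℂ} (hf : Adm S k f) :
    ContinuousOn (fun t : ℝ => f (t : ℂ) / (z - (t : ℂ))) (Set.Icc (S.a k) (S.b k)) := by
  refine ContinuousOn.div hf (by fun_prop) ?_
  intro t ht
  exact sub_ne S hz ht

theorem cT_cont {m : ℕ} (S : NikSys m) {k : ℕ} (hk : k ≤ m) {f : ℂ → ℂ} (hf : Adm S k f)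
    {z : ℂ} (hz : z ∉ cpx (Set.Icc (S.a k) (S.b k))) : ContinuousAt (cT S k f) z := by
  have hcl : IsClosed (cpx (Set.Icc (S.a k) (S.b k))) :=
    (isCompact_Icc.image Complex.continuous_ofReal).isClosed
  obtain ⟨δ, hδ, hball⟩ := Metric.isOpen_iff.1 hcl.isOpen_compl z hz
  have hev : ∀ᶠ w in nhds z, w ∈ Metric.ball z (δ / 2) := Metric.ball_mem_nhds z (by linarith)
  refine ContinuousAt.mul continuousAt_const ?_
  refine continuousAt_of_dominated (bound := fun t => ‖f (t : ℂ)‖ / (δ / 2)) ?_ ?_ ?_ ?_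
  · filter_upwards [hev] with w hw
    have hw' : w ∉ cpx (Set.Icc (S.a k) (S.b k)) :=
      hball (Metric.ball_subset_ball (by linarith) hw)
    exact (integ S hk (cont_div S hw' hf)).aestronglyMeasurable
  · filter_upwards [hev] with w hw
    filter_upwards [ae_mem S hk] with t ht
    rw [norm_div]
    have h1 : δ ≤ dist (t : ℂ) z := by
      by_contra hcon
      exact hball (Metric.mem_ball.2 (not_le.1 hcon)) ⟨t, ht, rfl⟩
    have h2 : dist w z < δ / 2 := hw
    have h3 : dist (t : ℂ) z ≤ dist (t : ℂ) w + dist w z := dist_triangle _ _ _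
    have h4 : dist (t : ℂ) w = ‖w - (t : ℂ)‖ := by rw [dist_comm, dist_eq_norm]
    exact div_le_div_of_nonneg_left (norm_nonneg _) (by linarith) (by linarith)
  · exact (integ S hk hf).norm.div_const _
  · filter_upwards [ae_mem S hk] with t ht
    exact ContinuousAt.div continuousAt_const (by fun_prop) (sub_ne S hz ht)

theorem notMem_succ {m : ℕ} (S : NikSys m) {k : ℕ} (hk : k + 1 ≤ m) {t : ℝ}
    (ht : t ∈ Set.Icc (S.a k) (S.b k)) :
    (t : ℂ) ∉ cpx (Set.Icc (S.a (k + 1)) (S.b (k + 1))) := by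
  rintro ⟨s, hs, hst⟩
  have : s = t := by exact Complex.ofReal_injective hst
  subst this
  have h : s ∈ Set.Icc (S.a k) (S.b k) ∩ Set.Icc (S.a (k + 1)) (S.b (k + 1)) := ⟨ht, hs⟩
  rw [S.disj k (by omega)] at h
  exact h

theorem notMem_pred {m : ℕ} (S : NikSys m) {k : ℕ} (hk : k + 1 ≤ m) {t : ℝ}
    (ht : t ∈ Set.Icc (S.a (k + 1)) (S.b (k + 1))) :
    (t : ℂ) ∉ cpx (Set.Icc (S.a k) (S.b k)) := by
  rintro ⟨s, hs, hst⟩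
  have : s = t := by exact Complex.ofReal_injective hst
  subst this
  have h : s ∈ Set.Icc (S.a k) (S.b k) ∩ Set.Icc (S.a (k + 1)) (S.b (k + 1)) := ⟨hs, ht⟩
  rw [S.disj k (by omega)] at h
  exact h

theorem adm_down {m : ℕ} (S : NikSys m) {k : ℕ} (hk : k + 1 ≤ m) {f : ℂ → ℂ}
    (hf : Adm S (k + 1) f) : Adm S k (cT S (k + 1) f) := by
  intro t ht
  exact ((cT_cont S hk hf (notMem_succ S hk ht)).comp
    (f := fun x : ℝ => (x : ℂ)) (x := t) Complex.continuous_ofReal.continuousAt).continuousWithinAt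

theorem adm_up {m : ℕ} (S : NikSys m) {k : ℕ} (hk : k + 1 ≤ m) {f : ℂ → ℂ}
    (hf : Adm S k f) : Adm S (k + 1) (cT S k f) := by
  intro t ht
  exact ((cT_cont S (by omega) hf (notMem_pred S hk ht)).comp
    (f := fun x : ℝ => (x : ℂ)) (x := t) Complex.continuous_ofReal.continuousAt).continuousWithinAt

theorem cF_adm {m : ℕ} (S : NikSys m) (n : ℕ) : ∀ (i : ℕ) (g : ℂ → ℂ), i + n ≤ m →
    Adm S (i + n) g → Adm S i (cF S (i + 1) n g) := by
  induction n with
  | zero => intro i g _ hg; exact hg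
  | succ n ih =>
    intro i g hin hg
    have hg' : Adm S (i + 1 + n) g := by rwa [show i + 1 + n = i + (n + 1) by omega]
    exact adm_down S (by omega) (ih (i + 1) g (by omega) hg')

theorem cG_succ {m : ℕ} (S : NikSys m) (n : ℕ) : ∀ (i : ℕ) (f : ℂ → ℂ),
    cG S i (n + 1) f = cT S (i + n) (cG S i n f) := by
  induction n with
  | zero => intro i f; rfl
  | succ n ih =>
    intro i f
    have h := ih (i + 1) (cT S i f)
    rw [show i + 1 + n = i + (n + 1) by omega] at h
    exact h

/-- Fubini for neighbouring measures. -/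
theorem swap_pair {m : ℕ} (S : NikSys m) {i : ℕ} (hi : i + 1 ≤ m) {f h : ℂ → ℂ}
    (hf : Adm S i f) (hh : Adm S (i + 1) h) :
    (S.e i : ℂ) * ∫ x, f (x : ℂ) * cT S (i + 1) h (x : ℂ) ∂(S.μ i) =
      - ((S.e (i + 1) : ℂ) * ∫ t, cT S i f (t : ℂ) * h (t : ℂ) ∂(S.μ (i + 1))) := by
  have := S.fin i
  have := S.fin (i + 1)
  have hint : Integrable (Function.uncurry fun x t : ℝ =>
      f (x : ℂ) * h (t : ℂ) / ((x : ℂ) - (t : ℂ))) ((S.μ i).prod (S.μ (i + 1))) := by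
    rw [← restr S (show i ≤ m by omega), ← restr S hi, Measure.prod_restrict]
    refine ContinuousOn.integrableOn_compact (isCompact_Icc.prod isCompact_Icc) ?_
    refine ContinuousOn.div ?_ (by fun_prop) ?_
    · refine ContinuousOn.mul ?_ ?_
      · exact ContinuousOn.comp (g := fun x : ℝ => f (x : ℂ)) hf continuousOn_fst
          (fun p hp => hp.1)
      · exact ContinuousOn.comp (g := fun x : ℝ => h (x : ℂ)) hh continuousOn_snd
          (fun p hp => hp.2)
    · rintro ⟨x, t⟩ ⟨hx, ht⟩
      exact sub_ne S (notMem_succ S hi hx) ht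
  have hsw := integral_integral_swap hint
  have h1 : ∀ x : ℝ, f (x : ℂ) * cT S (i + 1) h (x : ℂ) =
      (S.e (i + 1) : ℂ) * ∫ t, f (x : ℂ) * h (t : ℂ) / ((x : ℂ) - (t : ℂ)) ∂(S.μ (i + 1)) := by
    intro x
    simp only [cT, mul_div_assoc, integral_const_mul]
    ring
  have h2 : ∀ t : ℝ, cT S i f (t : ℂ) * h (t : ℂ) =
      -((S.e i : ℂ) * ∫ x, f (x : ℂ) * h (t : ℂ) / ((x : ℂ) - (t : ℂ)) ∂(S.μ i)) := by
    intro t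
    have : ∀ x : ℝ, f (x : ℂ) * h (t : ℂ) / ((x : ℂ) - (t : ℂ)) =
        -h (t : ℂ) * (f (x : ℂ) / ((t : ℂ) - (x : ℂ))) := by
      intro x
      rw [← neg_sub (t : ℂ) (x : ℂ), div_neg]
      ring
    simp only [this, integral_const_mul, cT]
    ring
  simp only [h1, h2, integral_const_mul, integral_neg]
  rw [hsw]
  ring

theorem adjoint {m : ℕ} (S : NikSys m) (n : ℕ) : ∀ (i : ℕ) (f g : ℂ → ℂ), i + n ≤ m →
    Adm S i f → Adm S (i + n) g →
    (S.e i : ℂ) * ∫ x, f (x : ℂ) * cF S (i + 1) n g (x : ℂ) ∂(S.μ i) =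
      (-1) ^ n * ((S.e (i + n) : ℂ) * ∫ y, cG S i n f (y : ℂ) * g (y : ℂ) ∂(S.μ (i + n))) := by
  induction n with
  | zero => intro i f g _ _ _; simp [cF, cG]
  | succ n ih =>
    intro i f g hin hf hg
    have e1 : i + (n + 1) = i + 1 + n := by omega
    rw [e1] at hg ⊢
    have := ih (i + 1) (cT S i f) g (by omega) (adm_up S (by omega) hf) hg
    have hs := swap_pair S (i := i) (by omega) hf (cF_adm S n (i + 1) g (by omega) hg)
    simp only [cF, cG]
    rw [hs, this]
    ring

theorem cT_congr {m : ℕ} (S : NikSys m) {k : ℕ} (hk : k ≤ m) {f g : ℂ → ℂ}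
    (h : ∀ x ∈ Set.Icc (S.a k) (S.b k), f ((x : ℝ) : ℂ) = g (x : ℂ)) (z : ℂ) :
    cT S k f z = cT S k g z := by
  unfold cT
  congr 1
  refine integral_congr_ae ?_
  filter_upwards [ae_mem S hk] with t ht
  rw [h t ht]

theorem cT_add {m : ℕ} (S : NikSys m) {k : ℕ} (hk : k ≤ m) {f g : ℂ → ℂ}
    (hf : Adm S k f) (hg : Adm S k g) {z : ℂ} (hz : z ∉ cpx (Set.Icc (S.a k) (S.b k))) :
    cT S k (fun x => f x + g x) z = cT S k f z + cT S k g z := by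
  simp only [cT, add_div]
  rw [integral_add (integ S hk (cont_div S hz hf)) (integ S hk (cont_div S hz hg))]
  ring

theorem cT_smul {m : ℕ} (S : NikSys m) (k : ℕ) (c : ℂ) (f : ℂ → ℂ) (z : ℂ) :
    cT S k (fun x => c * f x) z = c * cT S k f z := by
  simp only [cT, mul_div_assoc, integral_const_mul]
  ring

theorem cT_sum {m : ℕ} (S : NikSys m) {k : ℕ} (hk : k ≤ m) (s : Finset ℕ) {f : ℕ → ℂ → ℂ}
    (hf : ∀ l ∈ s, Adm S k (f l)) {z : ℂ} (hz : z ∉ cpx (Set.Icc (S.a k) (S.b k))) :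
    cT S k (fun x => ∑ l ∈ s, f l x) z = ∑ l ∈ s, cT S k (f l) z := by
  simp only [cT, Finset.sum_div]
  rw [integral_finsetSum _ (fun l hl => integ S hk (cont_div S hz (hf l hl))), Finset.mul_sum]

theorem two_point {m : ℕ} (S : NikSys m) (n : ℕ) : ∀ (i : ℕ) (z w : ℂ), i + n ≤ m →
    z ∉ cpx (Set.Icc (S.a i) (S.b i)) → w ∉ cpx (Set.Icc (S.a (i + n)) (S.b (i + n))) →
    cG S i (n + 1) (fun _ => 1) w =
      (∑ k ∈ Finset.range n, (-1 : ℂ) ^ k * cF S i (k + 1) (fun _ => 1) z *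
        cG S (i + k + 1) (n - k) (fun _ => 1) w) +
      (-1) ^ n * (cF S i (n + 1) (fun _ => 1) z +
        (z - w) * cF S i (n + 1) (fun x => 1 / (w - x)) z) := by
  induction n with
  | zero =>
    intro i z w hi hz hw
    have hw : w ∉ cpx (Set.Icc (S.a i) (S.b i)) := hw
    have ha : Adm S i (fun _ => 1) := continuousOn_const
    have hb : Adm S i (fun x => 1 / (w - x)) := cont_div S hw ha
    simp only [cF, cG, Finset.range_zero, Finset.sum_empty, pow_zero, zero_add, one_mul]
    have hi' : i ≤ m := hi
    have hb' : Adm S i (fun x => (z - w) * (1 / (w - x))) :=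
      ContinuousOn.mul continuousOn_const hb
    rw [← cT_smul, ← cT_add S hi' ha hb' hz]
    unfold cT
    congr 1
    refine integral_congr_ae ?_
    filter_upwards [ae_mem S hi'] with t ht
    have h1 := sub_ne S hz ht
    have h2 := sub_ne S hw ht
    field_simp
    ring
  | succ n ih =>
    intro i z w hi hz hw
    have e1 : i + (n + 1) = i + 1 + n := by omega
    have hw' : w ∉ cpx (Set.Icc (S.a (i + 1 + n)) (S.b (i + 1 + n))) := by rwa [← e1]
    have him : i ≤ m := by omega
    set g : ℂ → ℂ := fun x => 1 / (w - x) with hg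
    have hga : Adm S (i + (n + 1)) g := cont_div S hw (f := fun _ => 1) continuousOn_const
    set K := cF S (i + 1) (n + 1) g with hK
    set H := cF S (i + 1) (n + 1) (fun _ => 1) with hH
    have hKa : Adm S i K := cF_adm S (n + 1) i g hi hga
    have hHa : Adm S i H := cF_adm S (n + 1) i _ hi continuousOn_const
    have hFa : ∀ l ∈ Finset.range n, Adm S i (cF S (i + 1) (l + 1) (fun _ => 1)) := by
      intro l hl
      have := Finset.mem_range.1 hl
      exact cF_adm S (l + 1) i _ (by omega) continuousOn_const
    set c : ℕ → ℂ := fun k => (-1 : ℂ) ^ k * cG S (i + 1 + k + 1) (n - k) (fun _ => 1) w with hc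
    -- integrate the induction hypothesis
    have key : cT S i (fun _ => cG S (i + 1) (n + 1) (fun _ => 1) w * 1) z =
        cT S i (fun x => (∑ k ∈ Finset.range n, c k * cF S (i + 1) (k + 1) (fun _ => 1) x) +
          (-1) ^ n * (H x + (x - w) * K x)) z := by
      refine cT_congr S him ?_ z
      intro x hx
      rw [mul_one, ih (i + 1) x w (by omega) (notMem_succ S (by omega) hx) hw']
      congr 1
      refine Finset.sum_congr rfl fun k _ => ?_
      simp only [hc]
      ring
    have hxK : Adm S i (fun x => (x - w) * K x) :=
      ContinuousOn.mul (by fun_prop) hKa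
    have hterm : ∀ l ∈ Finset.range n,
        Adm S i (fun x => c l * cF S (i + 1) (l + 1) (fun _ => 1) x) :=
      fun l hl => ContinuousOn.mul continuousOn_const (hFa l hl)
    have hsumA : Adm S i
        (fun x => ∑ k ∈ Finset.range n, c k * cF S (i + 1) (k + 1) (fun _ => 1) x) :=
      continuousOn_finsetSum _ hterm
    have hHK : Adm S i (fun x => (-1) ^ n * (H x + (x - w) * K x)) :=
      ContinuousOn.mul continuousOn_const (ContinuousOn.add hHa hxK)
    rw [cT_smul, cT_add S him hsumA hHK hz, cT_sum S him _ hterm hz, cT_smul,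
      cT_add S him hHa hxK hz] at key
    simp only [cT_smul] at key
    -- the last term
    have hlast : cT S i (fun x => (x - w) * K x) z =
        (z - w) * cT S i K z - (S.e i : ℂ) * ∫ x, 1 * K (x : ℂ) ∂(S.μ i) := by
      rw [← cT_smul]
      unfold cT
      rw [← mul_sub, ← integral_sub]
      · congr 1
        refine integral_congr_ae ?_
        filter_upwards [ae_mem S him] with t ht
        have h1 := sub_ne S hz ht
        field_simp
        ring
      · exact integ S him (cont_div S hz (f := fun x => (z - w) * K x)
          (continuousOn_const.mul hKa))
      · exact integ S him (continuousOn_const.mul hKa)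
    have hadj := adjoint S (n + 1) i (fun _ => 1) g hi continuousOn_const hga
    have hGT : (S.e (i + (n + 1)) : ℂ) * ∫ y, cG S i (n + 1) (fun _ => 1) (y : ℂ) * g (y : ℂ)
        ∂(S.μ (i + (n + 1))) = cG S i (n + 1 + 1) (fun _ => 1) w := by
      rw [cG_succ S (n + 1) i]
      simp only [cT, hg, mul_one_div]
    rw [hGT] at hadj
    rw [hlast, hadj] at key
    rw [Finset.sum_range_succ']
    have hsum : ∑ k ∈ Finset.range n, (-1 : ℂ) ^ (k + 1) * cF S i (k + 1 + 1) (fun _ => 1) z *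
        cG S (i + (k + 1) + 1) (n + 1 - (k + 1)) (fun _ => 1) w =
        - ∑ k ∈ Finset.range n, c k * cT S i (cF S (i + 1) (k + 1) (fun _ => 1)) z := by
      rw [← Finset.sum_neg_distrib]
      refine Finset.sum_congr rfl fun k _ => ?_
      rw [show i + (k + 1) + 1 = i + 1 + k + 1 by omega, show n + 1 - (k + 1) = n - k by omega]
      simp only [hc, cF]
      ring
    rw [hsum]
    have hF1 : cF S i (0 + 1) (fun _ => 1) z = cT S i (fun _ => 1) z := rfl
    have hFK : cF S i (n + 1 + 1) g z = cT S i K z := rfl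
    have hFH : cF S i (n + 1 + 1) (fun _ => 1) z = cT S i H z := rfl
    rw [hF1, hFK, hFH]
    simp only [pow_zero, one_mul, add_zero, Nat.sub_zero]
    have hsq : ((-1 : ℂ) ^ n) * ((-1 : ℂ) ^ n) = 1 := by
      rw [← mul_pow]; simp
    rw [pow_succ] at key ⊢
    linear_combination -key - (cG S i (n + 1 + 1) (fun _ => 1) w) * hsq

theorem listHat_chain {m : ℕ} (S : NikSys m) (n : ℕ) : ∀ i : ℕ,
    listHat ((List.range' i n).map fun t => (S.μ t, S.e t)) = cF S i n (fun _ => 1) := by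
  induction n with
  | zero => intro i; funext z; simp [listHat, cF]
  | succ n ih =>
    intro i
    funext z
    simp only [List.range'_succ, List.map_cons, listHat, cF, cT, ih (i + 1)]

theorem listHat_rchain {m : ℕ} (S : NikSys m) (n : ℕ) : ∀ i : ℕ,
    listHat ((List.range' i n).map fun t => (S.μ t, S.e t)).reverse = cG S i n (fun _ => 1) := by
  induction n with
  | zero => intro i; funext z; simp [listHat, cG]
  | succ n ih =>
    intro i
    funext z
    rw [cG_succ, List.range'_concat]
    simp only [List.map_append, List.map_cons, List.map_nil, List.reverse_append,
      List.reverse_cons, List.reverse_nil, List.nil_append, List.singleton_append, listHat, cT,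
      ih i, one_mul]

/-- For a Nikishin system and `0 ≤ i < j ≤ m`, on
`ℂ ∖ (Δ_i ∪ Δ_j)` one has
`⟨σ_j,…,σ_i⟩^ = ∑_{k=i}^{j-1} (-1)^{k-i} ⟨σ_i,…,σ_k⟩^ ⟨σ_j,…,σ_{k+1}⟩^
 + (-1)^{j-i} ⟨σ_i,…,σ_j⟩^`. -/
theorem reversed_chain_formula
    (m : ℕ) (S : NikSys m) (i j : ℕ) (hij : i < j) (hj : j ≤ m) :
    ∀ z : ℂ, z ∉ cpx (Set.Icc (S.a i) (S.b i)) → z ∉ cpx (Set.Icc (S.a j) (S.b j)) →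
      listHat (rchain S.μ S.e i j) z =
        (∑ k ∈ Finset.Icc i (j - 1), (-1 : ℂ) ^ (k - i) *
          listHat (chain S.μ S.e i k) z * listHat (rchain S.μ S.e (k + 1) j) z) +
        (-1 : ℂ) ^ (j - i) * listHat (chain S.μ S.e i j) z := by
  intro z hzi hzj
  obtain ⟨n, rfl⟩ : ∃ n, j = i + n := ⟨j - i, by omega⟩
  have hc : ∀ k, listHat (chain S.μ S.e i k) = cF S i (k + 1 - i) (fun _ => 1) :=
    fun k => listHat_chain S _ i
  have hr : ∀ k, listHat (rchain S.μ S.e k (i + n)) = cG S k (i + n + 1 - k) (fun _ => 1) :=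
    fun k => listHat_rchain S _ k
  have h := two_point S n i z z hj hzi hzj
  rw [sub_self, zero_mul, add_zero] at h
  simp only [hc, hr]
  rw [show i + n + 1 - i = n + 1 by omega, show i + n - i = n by omega, h]
  congr 1
  have hI : Finset.Icc i (i + n - 1) = Finset.Ico i (i + n) := by
    ext x
    simp only [Finset.mem_Icc, Finset.mem_Ico]
    omega
  rw [hI, Finset.sum_Ico_eq_sum_range]
  rw [show i + n - i = n by omega]
  refine Finset.sum_congr rfl fun k _ => ?_
  rw [show i + k - i = k by omega, show i + k + 1 - i = k + 1 by omega,
    show i + n + 1 - (i + k + 1) = n - k by omega]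

end
end

section
/- Let S¹ = N(σ¹_0,…,σ¹_{m₁}) be a Nikishin system on intervals Δ¹_0,…,Δ¹_{m₁}, let a_0,…,a_{m₁} be arbitrary polynomials, and define the linear forms A_j(z) = Σ_{k=j}^{m₁} a_k(z) ŝ¹_{j+1,k}(z) for j = 0,…,m₁ (ŝ¹_{j+1,j} ≡ 1, so A_{m₁} = a_{m₁}, and ŝ¹_{j+1,k} is the Cauchy transform of s¹_{j+1,k} = ⟨σ¹_{j+1},…,σ¹_k⟩). Then for each j = 0,…,m₁ and every z ∈ ℂ∖(Δ¹_{j+1} ∪ … ∪ Δ¹_{m₁}): a_j(z) = A_j(z) + Σ_{k=j+1}^{m₁} (−1)^{k−j} ⟨σ¹_k,σ¹_{k−1},…,σ¹_{j+1}⟩^(z) · A_k(z), where μ̂ and ⟨…⟩^ denote Cauchy transforms (the sum is empty for j = m₁). -/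
open MeasureTheory Polynomial Set Filter

noncomputable section

/-- The linear form `𝒜_j(z) = ∑_{k=j}^{m₁} a_k(z) ŝ¹_{j+1,k}(z)` (list version). -/
def linFormL (μ : ℕ → Measure ℝ) (e : ℕ → ℝ) (m₁ j : ℕ) (A : ℕ → Polynomial ℝ)
    (z : ℂ) : ℂ :=
  ∑ k ∈ Finset.Icc j m₁, Polynomial.aeval z (A k) *
    (if j < k then listHat (chain μ e (j + 1) k) z else 1)

lemma null_compl_of_hull (μ : Measure ℝ) (s : Set ℝ) (h : convexHull ℝ (msupport μ) = s) :
    ∀ᵐ x ∂μ, x ∈ s := by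
  have h1 : μ (msupport μ)ᶜ = 0 := by
    apply measure_null_of_locally_null
    intro x hx
    simp only [msupport, mem_compl_iff, mem_ofPred_eq, not_forall, not_not] at hx
    obtain ⟨U, hU, hxU, h0⟩ := hx
    exact ⟨U, mem_nhdsWithin_of_mem_nhds (hU.mem_nhds hxU), h0⟩
  have h2 : ∀ᵐ x ∂μ, x ∈ msupport μ := h1
  filter_upwards [h2] with x hx
  rw [← h]
  exact subset_convexHull ℝ _ hx

lemma measurable_cauchy (ν : Measure ℝ) [IsFiniteMeasure ν] (c : ℂ) (f : ℂ → ℂ)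
    (hf : Measurable f) :
    Measurable (fun z : ℂ => c * ∫ t : ℝ, f (t : ℂ) / (z - (t : ℂ)) ∂ν) := by
  apply Measurable.const_mul
  refine (StronglyMeasurable.integral_prod_right (f := fun (z : ℂ) (t : ℝ) =>
    f (t : ℂ) / (z - (t : ℂ))) ?_).measurable
  apply Measurable.stronglyMeasurable
  unfold Function.uncurry
  fun_prop

lemma bound_cauchy (ν : Measure ℝ) [IsFiniteMeasure ν] (c : ℂ) (f : ℂ → ℂ) (I J : Set ℝ)
    (hI : IsCompact I) (hJ : IsCompact J) (hIJ : Disjoint I J)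
    (hν : ∀ᵐ x ∂ν, x ∈ I) (hf : ∃ C, ∀ x ∈ I, ‖f ((x : ℝ) : ℂ)‖ ≤ C) :
    ∃ C, ∀ y ∈ J, ‖c * ∫ t : ℝ, f (t : ℂ) / (((y : ℝ) : ℂ) - (t : ℂ)) ∂ν‖ ≤ C := by
  obtain ⟨C, hC⟩ := hf
  obtain ⟨D, hD⟩ := (hJ.prod hI).exists_bound_of_continuousOn
    (f := fun p : ℝ × ℝ => 1 / ((p.1 : ℂ) - (p.2 : ℂ))) (by
      apply ContinuousOn.div (by fun_prop) (by fun_prop)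
      rintro ⟨y, x⟩ ⟨hy, hx⟩ h0
      have : y = x := by simpa [sub_eq_zero] using h0
      subst this
      exact hIJ.le_bot ⟨hx, hy⟩)
  refine ⟨‖c‖ * (C * D * ν.real univ), fun y hy => ?_⟩
  rw [norm_mul]
  refine mul_le_mul_of_nonneg_left ?_ (norm_nonneg _)
  apply norm_integral_le_of_norm_le_const
  filter_upwards [hν] with x hx
  rw [div_eq_mul_one_div, norm_mul]
  exact mul_le_mul (hC x hx) (hD (y, x) ⟨hy, hx⟩) (norm_nonneg _)
    ((norm_nonneg _).trans (hC x hx))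

lemma bound_point (I : Set ℝ) (hI : IsCompact I) (z : ℂ) (hz : z ∉ cpx I) :
    ∃ D, ∀ x ∈ I, ‖1 / (z - ((x : ℝ) : ℂ))‖ ≤ D := by
  apply hI.exists_bound_of_continuousOn
  apply ContinuousOn.div (by fun_prop) (by fun_prop)
  intro x hx h0
  exact hz ⟨x, hx, (sub_eq_zero.mp h0).symm⟩

lemma integrable_aux (μ ν : Measure ℝ) [IsFiniteMeasure μ] [IsFiniteMeasure ν]
    (f g : ℂ → ℂ) (hf : Measurable f) (hg : Measurable g) (I J : Set ℝ)
    (hI : IsCompact I) (hJ : IsCompact J) (hIJ : Disjoint I J)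
    (hμ : ∀ᵐ x ∂μ, x ∈ I) (hν : ∀ᵐ x ∂ν, x ∈ J)
    (hfb : ∃ C, ∀ x ∈ I, ‖f ((x : ℝ) : ℂ)‖ ≤ C) (hgb : ∃ C, ∀ x ∈ J, ‖g ((x : ℝ) : ℂ)‖ ≤ C)
    (z : ℂ) (hzI : z ∉ cpx I) :
    Integrable (fun p : ℝ × ℝ =>
      f p.1 * (g p.2 / ((p.1 : ℂ) - (p.2 : ℂ))) / (z - (p.1 : ℂ))) (μ.prod ν) := by
  obtain ⟨C, hC⟩ := hfb
  obtain ⟨C', hC'⟩ := hgb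
  obtain ⟨E, hE⟩ := bound_point I hI z hzI
  obtain ⟨D, hD⟩ := (hI.prod hJ).exists_bound_of_continuousOn
    (f := fun p : ℝ × ℝ => 1 / ((p.1 : ℂ) - (p.2 : ℂ))) (by
      apply ContinuousOn.div (by fun_prop) (by fun_prop)
      rintro ⟨y, x⟩ ⟨hy, hx⟩ h0
      have : y = x := by simpa [sub_eq_zero] using h0
      subst this
      exact hIJ.le_bot ⟨hy, hx⟩)
  refine Integrable.of_bound (C := C * (C' * D) * E) ?_ ?_
  · apply Measurable.aestronglyMeasurable
    fun_prop
  · have h1 : ∀ᵐ p ∂(μ.prod ν), p.1 ∈ I := Measure.quasiMeasurePreserving_fst.ae hμ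
    have h2 : ∀ᵐ p ∂(μ.prod ν), p.2 ∈ J := Measure.quasiMeasurePreserving_snd.ae hν
    filter_upwards [h1, h2] with p hp1 hp2
    have e : f p.1 * (g p.2 / ((p.1 : ℂ) - (p.2 : ℂ))) / (z - (p.1 : ℂ)) =
      f p.1 * (g p.2 * (1 / ((p.1 : ℂ) - (p.2 : ℂ)))) * (1 / (z - (p.1 : ℂ))) := by
      ring
    rw [e, norm_mul, norm_mul, norm_mul]
    have a1 := hC _ hp1
    have a2 := hC' _ hp2
    have a3 := hE _ hp1
    have a4 := hD p ⟨hp1, hp2⟩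
    have b1 := (norm_nonneg _).trans a1
    have b2 := (norm_nonneg _).trans a2
    have b4 := (norm_nonneg _).trans a4
    gcongr

lemma mul_cauchy (μ ν : Measure ℝ) [IsFiniteMeasure μ] [IsFiniteMeasure ν]
    (f g : ℂ → ℂ) (hf : Measurable f) (hg : Measurable g) (I J : Set ℝ)
    (hI : IsCompact I) (hJ : IsCompact J) (hIJ : Disjoint I J)
    (hμ : ∀ᵐ x ∂μ, x ∈ I) (hν : ∀ᵐ x ∂ν, x ∈ J)
    (hfb : ∃ C, ∀ x ∈ I, ‖f ((x : ℝ) : ℂ)‖ ≤ C) (hgb : ∃ C, ∀ x ∈ J, ‖g ((x : ℝ) : ℂ)‖ ≤ C)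
    (z : ℂ) (hzI : z ∉ cpx I) (hzJ : z ∉ cpx J) :
    (∫ x : ℝ, f x / (z - x) ∂μ) * (∫ y : ℝ, g y / (z - y) ∂ν) =
      (∫ x : ℝ, f x * (∫ y : ℝ, g y / ((x : ℂ) - y) ∂ν) / (z - x) ∂μ) +
      (∫ y : ℝ, g y * (∫ x : ℝ, f x / ((y : ℂ) - x) ∂μ) / (z - y) ∂ν) := by
  have i1 := integrable_aux μ ν f g hf hg I J hI hJ hIJ hμ hν hfb hgb z hzI
  have i2 := integrable_aux ν μ g f hg hf J I hJ hI hIJ.symm hν hμ hgb hfb z hzJ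
  have i2' : Integrable (fun p : ℝ × ℝ =>
      g p.2 * (f p.1 / ((p.2 : ℂ) - (p.1 : ℂ))) / (z - (p.2 : ℂ))) (μ.prod ν) := i2.swap
  rw [← integral_prod_mul]
  have e : ∫ p : ℝ × ℝ, f p.1 / (z - p.1) * (g p.2 / (z - p.2)) ∂(μ.prod ν) =
      ∫ p : ℝ × ℝ, (f p.1 * (g p.2 / ((p.1 : ℂ) - (p.2 : ℂ))) / (z - (p.1 : ℂ)) +
        g p.2 * (f p.1 / ((p.2 : ℂ) - (p.1 : ℂ))) / (z - (p.2 : ℂ))) ∂(μ.prod ν) := by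
    apply integral_congr_ae
    have h1 : ∀ᵐ p ∂(μ.prod ν), p.1 ∈ I := Measure.quasiMeasurePreserving_fst.ae hμ
    have h2 : ∀ᵐ p ∂(μ.prod ν), p.2 ∈ J := Measure.quasiMeasurePreserving_snd.ae hν
    filter_upwards [h1, h2] with p hp1 hp2
    have n1 : z - (p.1 : ℂ) ≠ 0 := fun h0 => hzI ⟨p.1, hp1, (sub_eq_zero.mp h0).symm⟩
    have n2 : z - (p.2 : ℂ) ≠ 0 := fun h0 => hzJ ⟨p.2, hp2, (sub_eq_zero.mp h0).symm⟩
    have n3 : (p.1 : ℂ) - (p.2 : ℂ) ≠ 0 := by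
      intro h0
      have h3 : p.1 = p.2 := by simpa [sub_eq_zero] using h0
      exact hIJ.le_bot ⟨hp1, h3 ▸ hp2⟩
    have n4 : (p.2 : ℂ) - (p.1 : ℂ) = -((p.1 : ℂ) - (p.2 : ℂ)) := by ring
    rw [n4]
    field_simp
    ring
  rw [e, integral_add i1 i2', integral_prod _ i1, integral_prod_symm _ i2']
  congr 1
  · refine integral_congr_ae (Eventually.of_forall fun x => ?_)
    simp only [integral_div, integral_const_mul]
  · refine integral_congr_ae (Eventually.of_forall fun x => ?_)
    simp only [integral_div, integral_const_mul]

lemma key_sum (N : ℕ) (μ : ℕ → Measure ℝ) (e : ℕ → ℂ) (I : ℕ → Set ℝ) (R F : ℕ → ℂ → ℂ)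
    (hfin : ∀ i, IsFiniteMeasure (μ i)) (hI : ∀ i, IsCompact (I i))
    (hμ : ∀ i ≤ N, ∀ᵐ x ∂(μ i), x ∈ I i)
    (hd : ∀ i < N, Disjoint (I i) (I (i + 1)))
    (hR0 : ∀ z, R 0 z = 1)
    (hR : ∀ i z, R (i + 1) z = e i * ∫ t : ℝ, R i t / (z - t) ∂(μ i))
    (hFN : ∀ z, F (N + 1) z = 1)
    (hF : ∀ i ≤ N, ∀ z, F i z = e i * ∫ t : ℝ, F (i + 1) t / (z - t) ∂(μ i))
    (z : ℂ) (hz : ∀ i ≤ N, z ∉ cpx (I i)) :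
    ∑ i ∈ Finset.range (N + 2), (-1 : ℂ) ^ i * (R i z * F i z) = 0 := by
  have mR : ∀ i, Measurable (R i) := by
    intro i
    induction i with
    | zero => rw [show R 0 = fun _ => 1 from funext hR0]; exact measurable_const
    | succ i ih => rw [show R (i + 1) = _ from funext (hR i)]; exact measurable_cauchy _ _ _ ih
  have mF : ∀ n i, i + n = N + 1 → Measurable (F i) := by
    intro n
    induction n with
    | zero =>
      intro i hi
      obtain rfl : i = N + 1 := by omega
      rw [show F (N + 1) = fun _ => 1 from funext hFN]; exact measurable_const
    | succ n ih =>
      intro i hi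
      rw [show F i = _ from funext (hF i (by omega))]
      exact measurable_cauchy _ _ _ (ih (i + 1) (by omega))
  have bR : ∀ i ≤ N, ∃ C, ∀ x ∈ I i, ‖R i ((x : ℝ) : ℂ)‖ ≤ C := by
    intro i
    induction i with
    | zero => intro _; exact ⟨1, fun x _ => by simp [hR0]⟩
    | succ i ih =>
      intro hi
      simp only [hR]
      exact bound_cauchy _ _ _ _ _ (hI i) (hI (i + 1)) (hd i (by omega)) (hμ i (by omega))
        (ih (by omega))
  have bF : ∀ n i, i + n = N → ∃ C, ∀ x ∈ I i, ‖F (i + 1) ((x : ℝ) : ℂ)‖ ≤ C := by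
    intro n
    induction n with
    | zero =>
      intro i hi
      obtain rfl : i = N := by omega
      exact ⟨1, fun x _ => by simp [hFN]⟩
    | succ n ih =>
      intro i hi
      simp only [hF (i + 1) (by omega)]
      exact bound_cauchy _ _ _ _ _ (hI (i + 1)) (hI i) (hd i (by omega)).symm
        (hμ (i + 1) (by omega)) (ih (i + 1) (by omega))
  set T : ℕ → ℂ := fun i => e i * ∫ x : ℝ, R i x * F (i + 1) x / (z - x) ∂(μ i) with hT
  have h0 : R 0 z * F 0 z = T 0 := by
    simp [hT, hR0, hF 0 (Nat.zero_le _) z]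
  have hlast : R (N + 1) z * F (N + 1) z = T N := by
    simp [hT, hFN, hR]
  have hstep : ∀ i < N, R (i + 1) z * F (i + 1) z = T i + T (i + 1) := by
    intro i hi
    have := mul_cauchy (μ i) (μ (i + 1)) (R i) (F (i + 2)) (mR i)
      (mF (N + 1 - (i + 2)) (i + 2) (by omega)) (I i) (I (i + 1)) (hI _) (hI _) (hd i hi)
      (hμ i (by omega)) (hμ (i + 1) (by omega)) (bR i (by omega))
      (bF (N - (i + 1)) (i + 1) (by omega)) z (hz i (by omega)) (hz (i + 1) (by omega))
    rw [hR i z, hF (i + 1) (by omega) z]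
    simp only [hT, hR, hF (i + 1) (by omega : i + 1 ≤ N)]
    have e1 : ∀ x : ℝ, R i x * (e (i + 1) * ∫ t : ℝ, F (i + 2) t / ((x : ℂ) - t) ∂(μ (i + 1)))
        / (z - x) = e (i + 1) * (R i x * (∫ t : ℝ, F (i + 2) t / ((x : ℂ) - t) ∂(μ (i + 1)))
        / (z - x)) := fun x => by ring
    have e2 : ∀ x : ℝ, (e i * ∫ t : ℝ, R i t / ((x : ℂ) - t) ∂(μ i)) * F (i + 2) x
        / (z - x) = e i * (F (i + 2) x * (∫ t : ℝ, R i t / ((x : ℂ) - t) ∂(μ i))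
        / (z - x)) := fun x => by ring
    simp only [show i + 1 + 1 = i + 2 from rfl, e1, e2, integral_const_mul]
    linear_combination e i * e (i + 1) * this
  have hpart : ∀ n ≤ N, ∑ i ∈ Finset.range (n + 1), (-1 : ℂ) ^ i * (R i z * F i z) =
      (-1) ^ n * T n := by
    intro n
    induction n with
    | zero => intro _; simp [h0]
    | succ n ih =>
      intro hn
      rw [Finset.sum_range_succ, ih (by omega), hstep n (by omega)]
      ring
  rw [Finset.sum_range_succ, hpart N le_rfl, hlast]
  ring

lemma chain_self (μ : ℕ → Measure ℝ) (e : ℕ → ℝ) (k : ℕ) : chain μ e (k + 1) k = [] := by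
  simp [chain]

lemma chain_cons (μ : ℕ → Measure ℝ) (e : ℕ → ℝ) (i k : ℕ) (h : i ≤ k) :
    chain μ e i k = (μ i, e i) :: chain μ e (i + 1) k := by
  unfold chain
  rw [show k + 1 - i = (k + 1 - (i + 1)) + 1 by omega, List.range'_succ]
  rfl

lemma rchain_succ (μ : ℕ → Measure ℝ) (e : ℕ → ℝ) (i k : ℕ) (h : i ≤ k + 1) :
    rchain μ e i (k + 1) = (μ (k + 1), e (k + 1)) :: rchain μ e i k := by
  unfold rchain chain
  rw [show k + 1 + 1 - i = (k + 1 - i) + 1 by omega, List.range'_concat]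
  simp [show i + (k + 1 - i) = k + 1 by omega]

lemma key_nik (m₁ : ℕ) (S : NikSys m₁) (j k : ℕ) (hjk : j < k) (hk : k ≤ m₁) (z : ℂ)
    (hz : ∀ k, j < k → k ≤ m₁ → z ∉ cpx (Set.Icc (S.a k) (S.b k))) :
    ∑ l ∈ Finset.Icc j k, (-1 : ℂ) ^ (l - j) * (listHat (rchain S.μ S.e (j + 1) l) z *
      listHat (chain S.μ S.e (l + 1) k) z) = 0 := by
  obtain ⟨N, rfl⟩ : ∃ N, k = j + 1 + N := ⟨k - (j + 1), by omega⟩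
  have := key_sum N (fun i => S.μ (j + 1 + i)) (fun i => (S.e (j + 1 + i) : ℂ))
    (fun i => Set.Icc (S.a (j + 1 + i)) (S.b (j + 1 + i)))
    (fun i => listHat (rchain S.μ S.e (j + 1) (j + i)))
    (fun i => listHat (chain S.μ S.e (j + i + 1) (j + 1 + N)))
    (fun i => S.fin _) (fun i => isCompact_Icc)
    (fun i hi => null_compl_of_hull _ _ (S.hull _ (by omega)))
    (fun i hi => Set.disjoint_iff_inter_eq_empty.mpr (S.disj _ (by omega)))
    (fun z => by simp [rchain, chain_self, listHat])
    (fun i z => by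
      rw [← add_assoc, rchain_succ _ _ _ _ (by omega), listHat, show j + i + 1 = j + 1 + i by omega])
    (fun z => by
      rw [show j + (N + 1) + 1 = (j + 1 + N) + 1 by omega, chain_self, listHat])
    (fun i hi z => by
      rw [show j + i + 1 = j + 1 + i by omega, chain_cons _ _ _ _ (by omega), listHat,
        show j + (i + 1) + 1 = j + 1 + i + 1 by omega])
    z (fun i hi => hz _ (by omega) (by omega))
  rw [← this, show Finset.Icc j (j + 1 + N) = Finset.Ico j (j + (N + 2)) by ext; simp; omega,
    Finset.sum_Ico_eq_sum_range, Nat.add_sub_cancel_left]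
  refine Finset.sum_congr rfl fun i _ => ?_
  rw [Nat.add_sub_cancel_left]

/-- Recovery of the polynomials from the linear forms: for any
polynomials `a_0,…,a_{m₁}` and every `z ∉ Δ¹_{j+1} ∪ … ∪ Δ¹_{m₁}`,
`a_j(z) = 𝒜_j(z) + ∑_{k=j+1}^{m₁} (-1)^{k-j} ⟨σ¹_k,…,σ¹_{j+1}⟩^(z) 𝒜_k(z)`. -/
theorem polynomial_from_forms
    (m₁ : ℕ) (S : NikSys m₁) (A : ℕ → Polynomial ℝ) :
    ∀ j ≤ m₁, ∀ z : ℂ,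
      (∀ k, j < k → k ≤ m₁ → z ∉ cpx (Set.Icc (S.a k) (S.b k))) →
      (Polynomial.aeval z (A j) : ℂ) =
        linFormL S.μ S.e m₁ j A z +
        ∑ k ∈ Finset.Icc (j + 1) m₁, (-1 : ℂ) ^ (k - j) *
          listHat (rchain S.μ S.e (j + 1) k) z * linFormL S.μ S.e m₁ k A z := by
  intro j hj z hz
  have hL : ∀ l, linFormL S.μ S.e m₁ l A z = ∑ k ∈ Finset.Icc l m₁,
      (Polynomial.aeval z (A k) : ℂ) * listHat (chain S.μ S.e (l + 1) k) z := by
    intro l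
    refine Finset.sum_congr rfl fun k hk => ?_
    split_ifs with h
    · rfl
    · obtain rfl : k = l := by have := (Finset.mem_Icc.mp hk).1; omega
      rw [chain_self, listHat]
  have h1 : linFormL S.μ S.e m₁ j A z +
        ∑ k ∈ Finset.Icc (j + 1) m₁, (-1 : ℂ) ^ (k - j) *
          listHat (rchain S.μ S.e (j + 1) k) z * linFormL S.μ S.e m₁ k A z =
      ∑ k ∈ Finset.Icc j m₁, (-1 : ℂ) ^ (k - j) *
          listHat (rchain S.μ S.e (j + 1) k) z * linFormL S.μ S.e m₁ k A z := by
    rw [← Finset.add_sum_Ioc_eq_sum_Icc hj]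
    congr 1
    · simp [rchain, chain_self, listHat]
    · exact Finset.sum_congr (by ext x; simp only [Finset.mem_Icc, Finset.mem_Ioc]; omega)
        fun _ _ => rfl
  rw [h1]
  simp only [hL, Finset.mul_sum]
  rw [Finset.sum_comm' (t' := Finset.Icc j m₁) (s' := fun k => Finset.Icc j k)
    (by intro x y; simp only [Finset.mem_Icc]; omega)]
  have h2 : ∀ k ∈ Finset.Icc j m₁, ∑ l ∈ Finset.Icc j k, (-1 : ℂ) ^ (l - j) *
      listHat (rchain S.μ S.e (j + 1) l) z * ((Polynomial.aeval z (A k) : ℂ) *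
        listHat (chain S.μ S.e (l + 1) k) z) =
      if k = j then (Polynomial.aeval z (A j) : ℂ) else 0 := by
    intro k hk
    rw [Finset.mem_Icc] at hk
    split_ifs with h
    · subst h
      simp [rchain, chain_self, listHat]
    · have := key_nik m₁ S j k (by omega) hk.2 z hz
      rw [← mul_zero (Polynomial.aeval z (A k) : ℂ), ← this, Finset.mul_sum]
      exact Finset.sum_congr rfl fun l _ => by ring
  rw [Finset.sum_congr rfl h2, Finset.sum_ite_eq']
  simp [hj]

end
end
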